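/- If S_N obeys the (usual) Edgeworth expansion of order r, then for every nonzero resonant point t one has E[e^{itS_N}] = o(σ_N^{−(r−1)}) as N → ∞. -/

import Mathlib

open MeasureTheory ProbabilityTheory Filter Finset
open scoped ENNReal Topology

noncomputable section

namespace EdgeworthMC

variable {Ω E : Type*} [MeasurableSpace Ω] [MeasurableSpace E]

/-- The standard Gaussian density `𝔤(u) = (2π)^{-1/2} e^{-u²/2}`. -/
def gaussDensity (u : ℝ) : ℝ := (Real.sqrt (2 * Real.pi))⁻¹ * Real.exp (-u ^ 2 / 2)

/-- `UEChain μ X κ C` : the process `X` is a Markov chain (with respect to the probability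
measure `μ`) with transition kernels `κ n` from the state at time `n` to the state at time
`n+1`, and the chain is uniformly elliptic with ellipticity constant `C`:
`C⁻¹ ℙ(X_{n+1} ∈ A) ≤ ℙ(X_{n+1} ∈ A | X_n = x) ≤ C ℙ(X_{n+1} ∈ A)` for a.e. `x`. -/
def UEChain (μ : Measure Ω) (X : ℕ → Ω → E) (κ : ℕ → Kernel E E) (C : ℝ) : Prop :=
  IsProbabilityMeasure μ ∧
  (∀ n, Measurable (X n)) ∧
  (∀ n, IsMarkovKernel (κ n)) ∧
  (∀ n (A : Set E), MeasurableSet A →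
      (μ[fun ω => A.indicator (fun _ => (1 : ℝ)) (X (n + 1) ω) |
          ⨆ i : Fin (n + 1), MeasurableSpace.comap (X i) (inferInstance : MeasurableSpace E)]
        =ᵐ[μ] fun ω => (κ n (X n ω) A).toReal)) ∧
  (∀ n (A : Set E), MeasurableSet A → ∀ᵐ ω ∂μ,
      κ n (X n ω) A ≤ ENNReal.ofReal C * Measure.map (X (n + 1)) μ A ∧
      Measure.map (X (n + 1)) μ A ≤ ENNReal.ofReal C * κ n (X n ω) A)

/-- Partial sums `S_N = ∑_{n=1}^N f_n(X_n)`. -/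
def S (X : ℕ → Ω → E) (f : ℕ → E → ℤ) (N : ℕ) (ω : Ω) : ℤ :=
  ∑ n ∈ Finset.Icc 1 N, f n (X n ω)

/-- `V_N = Var(S_N)`. -/
def VN (μ : Measure Ω) (X : ℕ → Ω → E) (f : ℕ → E → ℤ) (N : ℕ) : ℝ :=
  variance (fun ω => ((S X f N ω : ℝ))) μ

/-- `σ_N = √V_N`. -/
def sigN (μ : Measure Ω) (X : ℕ → Ω → E) (f : ℕ → E → ℤ) (N : ℕ) : ℝ :=
  Real.sqrt (VN μ X f N)

/-- `a_N = 𝔼(S_N)`. -/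
def meanS (μ : Measure Ω) (X : ℕ → Ω → E) (f : ℕ → E → ℤ) (N : ℕ) : ℝ :=
  ∫ ω, ((S X f N ω : ℝ)) ∂μ

/-- The second largest value among the (finitely many) values of `p`, counted with
multiplicity: it equals `min_j max_{j' ≠ j} p j'`. -/
def secondLargest {ι : Type*} (p : ι → ℝ) : ℝ := ⨅ j, sSup (p '' {j}ᶜ)

/-- `q_n(m)` : the second largest value among `ℙ(Y_n ≡ j mod m)`, `j = 0,…,m-1`. -/
def qres (μ : Measure Ω) (X : ℕ → Ω → E) (f : ℕ → E → ℤ) (n m : ℕ) : ℝ :=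
  secondLargest (fun j : ZMod m => (μ {ω | ((f n (X n ω) : ZMod m)) = j}).toReal)

/-- `M_N = min_{2 ≤ m ≤ 2K} ∑_{n=1}^N q_n(m)`. -/
def MN (μ : Measure Ω) (X : ℕ → Ω → E) (f : ℕ → E → ℤ) (K N : ℕ) : ℝ :=
  sInf ((fun m => ∑ n ∈ Finset.Icc 1 N, qres μ X f n m) '' (Set.Icc 2 (2 * K)))

/-- `S_N` obeys the Edgeworth expansion of order `r` : there are polynomials `P_{b,N}`,
with coefficients uniformly bounded in `N` and degrees not depending on `N`, such that
uniformly in `k ∈ ℤ`,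
`ℙ(S_N = k) = ∑_{b=1}^r σ_N^{-b} P_{b,N}(k_N) 𝔤(k_N) + o(σ_N^{-r})`
where `k_N = (k - 𝔼 S_N)/σ_N`. -/
def Edgeworth (μ : Measure Ω) (X : ℕ → Ω → E) (f : ℕ → E → ℤ) (r : ℕ) : Prop :=
  ∃ (D : ℕ) (Cb : ℝ) (P : ℕ → ℕ → Polynomial ℝ),
    (∀ b N, (P b N).natDegree ≤ D) ∧
    (∀ b N i, |(P b N).coeff i| ≤ Cb) ∧
    ∀ ε > 0, ∃ N₀, ∀ N ≥ N₀, ∀ k : ℤ,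
      |(μ {ω | S X f N ω = k}).toReal -
          ∑ b ∈ Finset.Icc 1 r, (sigN μ X f N)⁻¹ ^ b *
            (P b N).eval (((k : ℝ) - meanS μ X f N) / sigN μ X f N) *
            gaussDensity (((k : ℝ) - meanS μ X f N) / sigN μ X f N)|
        ≤ ε * (sigN μ X f N)⁻¹ ^ r

/-- The σ-algebra generated by `X_{j 1}, …, X_{j ℓ}`. -/
def sigmaOf (X : ℕ → Ω → E) {ℓ : ℕ} (j : Fin ℓ → ℕ) : MeasurableSpace Ω :=
  ⨆ i : Fin ℓ, MeasurableSpace.comap (X (j i)) (inferInstance : MeasurableSpace E)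

/-- Conditional probability of the event `s` given the σ-algebra `m`. -/
def condProb (μ : Measure Ω) (m : MeasurableSpace Ω) (s : Set Ω) : Ω → ℝ :=
  μ[s.indicator (fun _ => (1 : ℝ)) | m]

/-- `S_N` obeys the Edgeworth expansion of order `r` in a conditionally stable way:
for every `ℓ`, the order `r` Edgeworth expansion holds for the conditional law of `S_N`
given `X_{j_1},…,X_{j_ℓ}`, with error term `o_ℓ(σ_N^{-r})` and polynomial coefficient
bounds depending only on `ℓ` (and `r`), uniformly over all choices of indices
`1 ≤ j_1,…,j_ℓ ≤ N`. -/
def CondStableEdgeworth (μ : Measure Ω) (X : ℕ → Ω → E) (f : ℕ → E → ℤ) (r : ℕ) : Prop :=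
  ∀ ℓ : ℕ, ∃ (D : ℕ) (Cb : ℝ), ∀ ε > 0, ∃ N₀, ∀ N ≥ N₀,
    ∀ j : Fin ℓ → ℕ, (∀ i, j i ∈ Finset.Icc 1 N) →
      ∃ P : ℕ → Ω → Polynomial ℝ,
        (∀ b ω, (P b ω).natDegree ≤ D) ∧
        (∀ b ω i, |(P b ω).coeff i| ≤ Cb) ∧
        ∀ᵐ ω ∂μ, ∀ k : ℤ,
          |condProb μ (sigmaOf X j) {ω' | S X f N ω' = k} ω -
              ∑ b ∈ Finset.Icc 1 r, (sigN μ X f N)⁻¹ ^ b *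
                (P b ω).eval (((k : ℝ) -
                    (μ[fun ω' => ((S X f N ω' : ℝ)) | sigmaOf X j]) ω) / sigN μ X f N) *
                gaussDensity (((k : ℝ) -
                    (μ[fun ω' => ((S X f N ω' : ℝ)) | sigmaOf X j]) ω) / sigN μ X f N)|
            ≤ ε * (sigN μ X f N)⁻¹ ^ r

/-- `t` is a resonant point: `t = 2πl/m` with `0 < m ≤ 2K`, `0 ≤ l < m`. -/
def IsResonant (K : ℕ) (t : ℝ) : Prop :=
  ∃ l m : ℕ, 0 < m ∧ m ≤ 2 * K ∧ l < m ∧ t = 2 * Real.pi * l / m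

/-- The conditional characteristic function `𝔼[e^{itS_N} | X_{j_1},…,X_{j_ℓ}]`. -/
def condChar (μ : Measure Ω) (X : ℕ → Ω → E) (f : ℕ → E → ℤ) (t : ℝ) (N : ℕ)
    {ℓ : ℕ} (j : Fin ℓ → ℕ) : Ω → ℂ :=
  μ[fun ω => Complex.exp (Complex.I * (t : ℂ) * ((S X f N ω : ℤ) : ℂ)) | sigmaOf X j]

end EdgeworthMC

namespace EdgeworthMC

variable {Ω E : Type*} [MeasurableSpace Ω] [MeasurableSpace E]

/-- The integral operator of a kernel acting on complex functions. -/
def kernelOp (η : Kernel E E) (u : E → ℂ) (x : E) : ℂ := ∫ y, u y ∂(η x)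

/-- One uniformly elliptic transition `η` from the law `ν` to the law `ν'`. -/
def EllipticStep (ν : Measure E) (η : Kernel E E) (ν' : Measure E) (C : ℝ) : Prop :=
  ∀ A : Set E, MeasurableSet A → ∀ᵐ x ∂ν,
    η x A ≤ ENNReal.ofReal C * ν' A ∧ ν' A ≤ ENNReal.ofReal C * η x A

lemma EllipticStep.lintegral {ν ν' : Measure E} {η : Kernel E E} {C : ℝ}
    (h : EllipticStep ν η ν' C) {g : E → ℝ≥0∞} (hg : Measurable g) :
    ∀ᵐ x ∂ν, ∫⁻ y, g y ∂(η x) ≤ ENNReal.ofReal C * ∫⁻ y, g y ∂ν' ∧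
      ∫⁻ y, g y ∂ν' ≤ ENNReal.ofReal C * ∫⁻ y, g y ∂(η x) := by
  refine Measurable.ennreal_induction (motive := fun g => ∀ᵐ x ∂ν,
    ∫⁻ y, g y ∂(η x) ≤ ENNReal.ofReal C * ∫⁻ y, g y ∂ν' ∧
      ∫⁻ y, g y ∂ν' ≤ ENNReal.ofReal C * ∫⁻ y, g y ∂(η x)) ?_ ?_ ?_ hg
  · intro c s hs
    filter_upwards [h s hs] with x hx
    rw [lintegral_indicator_const hs, lintegral_indicator_const hs]
    constructor
    · calc c * η x s ≤ c * (ENNReal.ofReal C * ν' s) := by gcongr; exact hx.1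
        _ = _ := by ring
    · calc c * ν' s ≤ c * (ENNReal.ofReal C * η x s) := by gcongr; exact hx.2
        _ = _ := by ring
  · intro f g _ hf hg h₁ h₂
    filter_upwards [h₁, h₂] with x hx₁ hx₂
    simp only [Pi.add_apply]
    rw [lintegral_add_left hf, lintegral_add_left hf, mul_add, mul_add]
    exact ⟨add_le_add hx₁.1 hx₂.1, add_le_add hx₁.2 hx₂.2⟩
  · intro f hf hmono hind
    filter_upwards [ae_all_iff.2 hind] with x hx
    rw [lintegral_iSup hf hmono, lintegral_iSup hf hmono, ENNReal.mul_iSup, ENNReal.mul_iSup]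
    exact ⟨iSup_mono fun n => (hx n).1, iSup_mono fun n => (hx n).2⟩

lemma integrable_of_bounded {α G : Type*} [MeasurableSpace α] [NormedAddCommGroup G]
    {ν : Measure α} [IsFiniteMeasure ν] {u : α → G} (hu : StronglyMeasurable u)
    (hb : ∃ R, ∀ x, ‖u x‖ ≤ R) : Integrable u ν := by
  obtain ⟨R, hR⟩ := hb
  exact Integrable.of_bound hu.aestronglyMeasurable R (ae_of_all _ hR)

lemma EllipticStep.integral {ν ν' : Measure E} {η : Kernel E E} {C : ℝ} [IsMarkovKernel η]
    [IsProbabilityMeasure ν'] (hC : 0 ≤ C)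
    (h : EllipticStep ν η ν' C) {g : E → ℝ} (hg : Measurable g) (hb : ∃ R, ∀ x, ‖g x‖ ≤ R)
    (hpos : ∀ᵐ y ∂ν', 0 ≤ g y) :
    ∀ᵐ x ∂ν, (∀ᵐ y ∂(η x), 0 ≤ g y) ∧ ∫ y, g y ∂(η x) ≤ C * ∫ y, g y ∂ν' ∧
      ∫ y, g y ∂ν' ≤ C * ∫ y, g y ∂(η x) := by
  have hm : MeasurableSet {y | ¬ 0 ≤ g y} := by
    simpa using measurableSet_lt hg measurable_const
  filter_upwards [h _ hm, h.lintegral hg.ennreal_ofReal] with x hx₀ hx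
  have hpos' : ∀ᵐ y ∂(η x), 0 ≤ g y := by
    rw [ae_iff] at hpos ⊢
    have := hx₀.1
    rw [hpos, mul_zero] at this
    exact le_antisymm this bot_le
  have i₁ : Integrable g (η x) := integrable_of_bounded hg.stronglyMeasurable hb
  have i₂ : Integrable g ν' := integrable_of_bounded hg.stronglyMeasurable hb
  rw [← ofReal_integral_eq_lintegral_ofReal i₁ hpos',
    ← ofReal_integral_eq_lintegral_ofReal i₂ hpos, ← ENNReal.ofReal_mul hC,
    ← ENNReal.ofReal_mul hC] at hx
  have j₁ := integral_nonneg_of_ae hpos'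
  have j₂ := integral_nonneg_of_ae hpos
  exact ⟨hpos', (ENNReal.ofReal_le_ofReal_iff (by positivity)).1 hx.1,
    (ENNReal.ofReal_le_ofReal_iff (by positivity)).1 hx.2⟩

lemma EllipticStep.ae_ae {ν ν' : Measure E} {η : Kernel E E} {C : ℝ}
    (h : EllipticStep ν η ν' C) {p : E → Prop} (hp : MeasurableSet {x | p x})
    (hν : ∀ᵐ y ∂ν', p y) : ∀ᵐ x ∂ν, ∀ᵐ y ∂(η x), p y := by
  filter_upwards [h _ hp.compl] with x hx
  rw [ae_iff] at hν ⊢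
  have := hx.1
  rw [Set.compl_ofPred, hν, mul_zero] at this
  exact le_antisymm this bot_le

lemma norm_le_of_forall_re_le {z : ℂ} {R : ℝ}
    (h : ∀ e : ℂ, ‖e‖ = 1 → (e * z).re ≤ R) : ‖z‖ ≤ R := by
  rcases eq_or_ne z 0 with rfl | hz
  · simpa using h 1 (by simp)
  · have hz' : (‖z‖ : ℂ) ≠ 0 := by simpa using hz
    have := h ((starRingEnd ℂ) z / ‖z‖) (by simp [hz])
    have e : (starRingEnd ℂ) z / ‖z‖ * z = (‖z‖ : ℂ) := by
      rw [div_mul_eq_mul_div, Complex.conj_mul']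
      field_simp
    rw [e] at this
    simpa using this

/-- Doeblin minorization: an elliptic step is, up to the constant `C⁻¹ ∫ v`, a contraction. -/
lemma EllipticStep.doeblin {ν ν' : Measure E} {η : Kernel E E} {C : ℝ} [IsMarkovKernel η]
    [IsProbabilityMeasure ν'] (hC : 1 < C)
    (h : EllipticStep ν η ν' C) {v : E → ℂ} (hv : Measurable v) (hb : ∃ R, ∀ x, ‖v x‖ ≤ R)
    {R : ℝ} (hR : ∀ᵐ y ∂ν', ‖v y‖ ≤ R) :
    ∀ᵐ x ∂ν, ‖kernelOp η v x - (C : ℂ)⁻¹ * ∫ y, v y ∂ν'‖ ≤ (1 - C⁻¹) * R := by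
  have hC0 : 0 < C := by linarith
  obtain ⟨R', hR'⟩ := hb
  obtain ⟨e, he⟩ := TopologicalSpace.exists_dense_seq (Metric.sphere (0 : ℂ) 1)
  have key : ∀ n : ℕ, ∀ᵐ x ∂ν, ((e n : ℂ) * (kernelOp η v x - (C : ℂ)⁻¹ * ∫ y, v y ∂ν')).re
      ≤ (1 - C⁻¹) * R := by
    intro n
    have hen : ‖(e n : ℂ)‖ = 1 := by simp
    have hm : Measurable (fun y => R - ((e n : ℂ) * v y).re) :=
      measurable_const.sub (Complex.measurable_re.comp (hv.const_mul _))
    have hbd : ∃ R₁, ∀ y, ‖R - ((e n : ℂ) * v y).re‖ ≤ R₁ := by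
      refine ⟨‖R‖ + R', fun y => (norm_sub_le _ _).trans ?_⟩
      gcongr
      refine (Complex.abs_re_le_norm _).trans ?_
      rw [norm_mul, hen, one_mul]
      exact hR' y
    have hp : ∀ᵐ y ∂ν', 0 ≤ R - ((e n : ℂ) * v y).re := by
      filter_upwards [hR] with y hy
      have := Complex.re_le_norm ((e n : ℂ) * v y)
      rw [norm_mul, hen, one_mul] at this
      linarith
    filter_upwards [h.integral hC0.le hm hbd hp] with x hx
    have iv : ∀ (ρ : Measure E) [IsProbabilityMeasure ρ],
        ∫ y, (R - ((e n : ℂ) * v y).re) ∂ρ = R - ((e n : ℂ) * ∫ y, v y ∂ρ).re := by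
      intro ρ _
      have i : Integrable v ρ := integrable_of_bounded hv.stronglyMeasurable ⟨R', hR'⟩
      have i₂ : Integrable (fun y => (e n : ℂ) * v y) ρ := i.const_mul _
      have e₁ : ∫ y, ((e n : ℂ) * v y).re ∂ρ = (∫ y, (e n : ℂ) * v y ∂ρ).re :=
        integral_re (𝕜 := ℂ) i₂
      have i₃ : Integrable (fun y => ((e n : ℂ) * v y).re) ρ := i₂.re
      rw [integral_sub (integrable_const _) i₃, integral_const]
      simp only [probReal_univ, one_smul]
      rw [← integral_const_mul, ← e₁]
    have h3 := hx.2.2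
    rw [iv, iv] at h3
    have hsplit : ((e n : ℂ) * (kernelOp η v x - (C : ℂ)⁻¹ * ∫ y, v y ∂ν')).re
        = ((e n : ℂ) * ∫ y, v y ∂(η x)).re - C⁻¹ * ((e n : ℂ) * ∫ y, v y ∂ν').re := by
      rw [← Complex.re_ofReal_mul, ← Complex.sub_re, kernelOp]
      congr 1
      push_cast
      ring
    rw [hsplit]
    have h4 : C⁻¹ * (R - ((e n : ℂ) * ∫ y, v y ∂ν').re) ≤ R - ((e n : ℂ) * ∫ y, v y ∂(η x)).re := by
      rw [inv_mul_le_iff₀ hC0]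
      exact h3
    linarith
  filter_upwards [ae_all_iff.2 key] with x hx
  refine norm_le_of_forall_re_le fun a ha => ?_
  have hcl : IsClosed {a : Metric.sphere (0 : ℂ) 1 |
      ((a : ℂ) * (kernelOp η v x - (C : ℂ)⁻¹ * ∫ y, v y ∂ν')).re ≤ (1 - C⁻¹) * R} :=
    isClosed_le (by fun_prop) continuous_const
  have := he.induction_on (p := fun a : Metric.sphere (0 : ℂ) 1 =>
      ((a : ℂ) * (kernelOp η v x - (C : ℂ)⁻¹ * ∫ y, v y ∂ν')).re ≤ (1 - C⁻¹) * R)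
      ⟨a, by simpa using ha⟩ hcl hx
  exact this

lemma measurable_kernelOp (η : Kernel E E) {u : E → ℂ} (hu : Measurable u) :
    Measurable (kernelOp η u) :=
  (hu.stronglyMeasurable.integral_kernel (κ := η)).measurable

lemma norm_kernelOp_le (η : Kernel E E) [IsMarkovKernel η] {u : E → ℂ} {R : ℝ}
    (hR : ∀ x, ‖u x‖ ≤ R) (x : E) : ‖kernelOp η u x‖ ≤ R := by
  simpa [kernelOp] using norm_integral_le_of_norm_le_const (μ := η x) (ae_of_all _ hR)

/-- `backward κ g k n x` is `𝔼[∏_{n < j ≤ n + k} g_j(X_j) | X_n = x]`. -/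
def backward (κ : ℕ → Kernel E E) (g : ℕ → E → ℂ) : ℕ → ℕ → E → ℂ
  | 0, _ => fun _ => 1
  | k + 1, n => kernelOp (κ n) (fun y => g (n + 1) y * backward κ g k (n + 1) y)

lemma measurable_backward (κ : ℕ → Kernel E E) {g : ℕ → E → ℂ} (hg : ∀ n, Measurable (g n))
    (k n : ℕ) : Measurable (backward κ g k n) := by
  induction k generalizing n with
  | zero => exact measurable_const
  | succ k ih => exact measurable_kernelOp _ ((hg _).mul (ih _))

lemma bounded_mul {α : Type*} {u v : α → ℂ} (hu : ∃ R, ∀ x, ‖u x‖ ≤ R)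
    (hv : ∃ R, ∀ x, ‖v x‖ ≤ R) : ∃ R, ∀ x, ‖u x * v x‖ ≤ R := by
  obtain ⟨R, hR⟩ := hu
  obtain ⟨R', hR'⟩ := hv
  refine ⟨R * R', fun x => ?_⟩
  rw [norm_mul]
  exact mul_le_mul (hR x) (hR' x) (norm_nonneg _) ((norm_nonneg _).trans (hR x))

lemma bounded_backward (κ : ℕ → Kernel E E) [∀ n, IsMarkovKernel (κ n)] {g : ℕ → E → ℂ}
    (hg : ∀ n, ∃ R, ∀ x, ‖g n x‖ ≤ R) (k n : ℕ) : ∃ R, ∀ x, ‖backward κ g k n x‖ ≤ R := by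
  induction k generalizing n with
  | zero => exact ⟨1, fun x => by simp [backward]⟩
  | succ k ih =>
    obtain ⟨R, hR⟩ := bounded_mul (hg (n + 1)) (ih (n + 1))
    exact ⟨R, norm_kernelOp_le _ hR⟩

/-- The σ-algebra of the past of the process up to time `n`. -/
abbrev pastSigma (X : ℕ → Ω → E) (n : ℕ) : MeasurableSpace Ω :=
  ⨆ i : Fin (n + 1), MeasurableSpace.comap (X i) (inferInstance : MeasurableSpace E)

lemma measurable_pastSigma (X : ℕ → Ω → E) {j n : ℕ} (hj : j ≤ n) :
    Measurable[pastSigma X n] (X j) := by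
  refine measurable_iff_comap_le.2 ?_
  exact le_iSup (fun i : Fin (n + 1) => MeasurableSpace.comap (X i)
    (inferInstance : MeasurableSpace E)) ⟨j, by omega⟩

lemma pastSigma_le {X : ℕ → Ω → E} (hX : ∀ n, Measurable (X n)) (n : ℕ) :
    pastSigma X n ≤ (inferInstance : MeasurableSpace Ω) :=
  iSup_le fun i => (hX i).comap_le

lemma integral_comp_kernelOp (ρ : Measure E) [IsFiniteMeasure ρ] (η : Kernel E E)
    [IsMarkovKernel η] {u : E → ℂ} (hu : Measurable u) (hb : ∃ R, ∀ x, ‖u x‖ ≤ R) :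
    ∫ y, u y ∂(η ∘ₘ ρ) = ∫ x, kernelOp η u x ∂ρ := by
  have hi : Integrable u (η ∘ₘ ρ) := integrable_of_bounded hu.stronglyMeasurable hb
  rw [Measure.comp_eq_comp_const_apply] at hi ⊢
  rw [Kernel.integral_comp hi]
  simp [kernelOp]

/-- The Markov property of the chain, for bounded functions. -/
lemma UEChain.condExp {μ : Measure Ω} {X : ℕ → Ω → E} {κ : ℕ → Kernel E E} {C : ℝ}
    (h : UEChain μ X κ C) (n : ℕ) {u : E → ℂ} (hu : Measurable u) (hb : ∃ R, ∀ x, ‖u x‖ ≤ R) :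
    (fun ω => kernelOp (κ n) u (X n ω)) =ᵐ[μ] μ[fun ω => u (X (n + 1) ω) | pastSigma X n] := by
  obtain ⟨hμ, hX, hκ, hM, -⟩ := h
  have := hκ n
  have hle := pastSigma_le hX n
  have hiu : Integrable (fun ω => u (X (n + 1) ω)) μ :=
    integrable_of_bounded (hu.comp (hX _)).stronglyMeasurable
      (hb.imp fun R hR x => hR _)
  have hTb : ∃ R, ∀ x, ‖kernelOp (κ n) u x‖ ≤ R := hb.imp fun R hR => norm_kernelOp_le _ hR
  have hiT : Integrable (fun ω => kernelOp (κ n) u (X n ω)) μ :=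
    integrable_of_bounded ((measurable_kernelOp _ hu).comp (hX _)).stronglyMeasurable
      (hTb.imp fun R hR x => hR _)
  refine ae_eq_condExp_of_forall_setIntegral_eq hle hiu (fun _ _ _ => hiT.integrableOn) ?_ ?_
  · intro G hG _
    have hmeas : (μ.restrict G).map (X (n + 1)) = κ n ∘ₘ ((μ.restrict G).map (X n)) := by
      ext A hA
      rw [Measure.map_apply (hX _) hA, Measure.bind_apply hA (κ n).measurable.aemeasurable,
        lintegral_map ((κ n).measurable_coe hA) (hX n)]
      have hi₁ : Integrable (fun ω => A.indicator (fun _ => (1 : ℝ)) (X (n + 1) ω)) μ := by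
        refine integrable_of_bounded ?_ ⟨1, fun ω => ?_⟩
        · exact ((measurable_const.indicator hA).comp (hX _)).stronglyMeasurable
        · by_cases hx : X (n + 1) ω ∈ A <;> simp [hx]
      have e := setIntegral_condExp hle hi₁ hG
      rw [setIntegral_congr_ae (g := fun ω => (κ n (X n ω) A).toReal) (hle _ hG)
        ((hM n A hA).mono fun ω hω _ => hω)] at e
      have e₂ : ∫ ω in G, A.indicator (fun _ => (1 : ℝ)) (X (n + 1) ω) ∂μ
          = ((μ.restrict G) (X (n + 1) ⁻¹' A)).toReal := by
        rw [← measureReal_def, ← integral_indicator_one ((hX (n + 1)) hA)]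
        rfl
      rw [e₂] at e
      have e₃ : ∫ ω in G, (κ n (X n ω) A).toReal ∂μ
          = (∫⁻ ω in G, κ n (X n ω) A ∂μ).toReal :=
        integral_toReal (((κ n).measurable_coe hA).comp (hX n)).aemeasurable
          (ae_of_all _ fun ω => measure_lt_top _ _)
      rw [e₃] at e
      refine (ENNReal.toReal_eq_toReal_iff' (measure_ne_top _ _) ?_).1 e.symm
      refine ne_top_of_le_ne_top (measure_ne_top (μ.restrict G) Set.univ) ?_
      calc ∫⁻ ω in G, κ n (X n ω) A ∂μ ≤ ∫⁻ _ in G, 1 ∂μ := lintegral_mono fun ω => prob_le_one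
        _ = _ := by simp
    rw [← integral_map (hX n).aemeasurable
      (measurable_kernelOp _ hu).stronglyMeasurable.aestronglyMeasurable,
      ← integral_map (hX (n + 1)).aemeasurable hu.stronglyMeasurable.aestronglyMeasurable, hmeas,
      integral_comp_kernelOp _ _ hu hb]
  · exact ((measurable_kernelOp _ hu).comp
      (measurable_pastSigma X le_rfl)).stronglyMeasurable.aestronglyMeasurable

lemma UEChain.integral_mul {μ : Measure Ω} {X : ℕ → Ω → E} {κ : ℕ → Kernel E E} {C : ℝ}
    (h : UEChain μ X κ C) (n : ℕ) {u : E → ℂ} (hu : Measurable u) (hb : ∃ R, ∀ x, ‖u x‖ ≤ R)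
    {F : Ω → ℂ} (hF : Measurable[pastSigma X n] F) (hFb : ∃ R, ∀ ω, ‖F ω‖ ≤ R) :
    ∫ ω, F ω * u (X (n + 1) ω) ∂μ = ∫ ω, F ω * kernelOp (κ n) u (X n ω) ∂μ := by
  have hc := h.condExp n hu hb
  obtain ⟨hμ, hX, -⟩ := h
  have hle := pastSigma_le hX n
  have hiu : Integrable (fun ω => u (X (n + 1) ω)) μ :=
    integrable_of_bounded (hu.comp (hX _)).stronglyMeasurable
      (hb.imp fun R hR x => hR _)
  obtain ⟨R, hR⟩ := hFb
  have hp := condExp_stronglyMeasurable_bilin_of_bound (ContinuousLinearMap.mul ℝ ℂ) hle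
    hF.stronglyMeasurable hiu R (ae_of_all _ hR)
  simp only [ContinuousLinearMap.mul_apply'] at hp
  rw [← integral_condExp hle, integral_congr_ae hp]
  refine integral_congr_ae ?_
  filter_upwards [hc] with ω hω
  rw [← hω]

lemma UEChain.integral_prod_mul_backward {μ : Measure Ω} {X : ℕ → Ω → E}
    {κ : ℕ → Kernel E E} {C : ℝ} (h : UEChain μ X κ C) {g : ℕ → E → ℂ}
    (hg : ∀ n, Measurable (g n)) (hb : ∀ n, ∃ R, ∀ x, ‖g n x‖ ≤ R) (k n : ℕ) :
    ∫ ω, (∏ j ∈ Finset.Icc 1 (n + k), g j (X j ω)) ∂μ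
      = ∫ ω, (∏ j ∈ Finset.Icc 1 n, g j (X j ω)) * backward κ g k n (X n ω) ∂μ := by
  have hκ := h.2.2.1
  induction k generalizing n with
  | zero => simp [backward]
  | succ k ih =>
    have hF : Measurable[pastSigma X n] (fun ω => ∏ j ∈ Finset.Icc 1 n, g j (X j ω)) :=
      Finset.measurable_fun_prod _ fun j hj => (hg j).comp
        (measurable_pastSigma X (Finset.mem_Icc.1 hj).2)
    have hFb : ∃ R, ∀ ω, ‖∏ j ∈ Finset.Icc 1 n, g j (X j ω)‖ ≤ R := by
      choose R hR using hb
      refine ⟨∏ j ∈ Finset.Icc 1 n, R j, fun ω => ?_⟩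
      rw [norm_prod]
      exact Finset.prod_le_prod (fun _ _ => norm_nonneg _) fun j _ => hR j _
    have e := h.integral_mul n ((hg (n + 1)).mul (measurable_backward κ hg k (n + 1)))
      (bounded_mul (hb (n + 1)) (bounded_backward κ hb k (n + 1))) hF hFb
    rw [show n + (k + 1) = n + 1 + k by ring, ih (n + 1)]
    refine Eq.trans ?_ e
    refine integral_congr_ae (ae_of_all _ fun ω => ?_)
    simp only [Pi.mul_apply]
    rw [Finset.prod_Icc_succ_top (by omega)]
    ring

lemma UEChain.integral_prod {μ : Measure Ω} {X : ℕ → Ω → E}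
    {κ : ℕ → Kernel E E} {C : ℝ} (h : UEChain μ X κ C) {g : ℕ → E → ℂ}
    (hg : ∀ n, Measurable (g n)) (hb : ∀ n, ∃ R, ∀ x, ‖g n x‖ ≤ R) (N : ℕ) :
    ∫ ω, (∏ j ∈ Finset.Icc 1 N, g j (X j ω)) ∂μ
      = ∫ x, backward κ g N 0 x ∂(μ.map (X 0)) := by
  have := h.integral_prod_mul_backward hg hb N 0
  rw [zero_add] at this
  rw [this, integral_map (h.2.1 0).aemeasurable
    (measurable_backward κ hg N 0).stronglyMeasurable.aestronglyMeasurable]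
  simp

lemma UEChain.ellipticStep {μ : Measure Ω} {X : ℕ → Ω → E} {κ : ℕ → Kernel E E} {C : ℝ}
    (h : UEChain μ X κ C) (n : ℕ) :
    EllipticStep (μ.map (X n)) (κ n) (μ.map (X (n + 1))) C := by
  intro A hA
  have hm := (κ n).measurable_coe hA
  rw [ae_map_iff (h.2.1 n).aemeasurable]
  · exact h.2.2.2.2 n A hA
  · exact (measurableSet_le hm measurable_const).inter
      (measurableSet_le measurable_const (hm.const_mul _))

/-- An elliptic step preserves closeness to a nonzero constant, and almost preserves closeness of
a second function, transported with defects `ζ` supported on `Z`, to a multiple of the first. -/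
lemma EllipticStep.cone {ν ν' : Measure E} {η : Kernel E E} {C : ℝ} [IsMarkovKernel η]
    [IsProbabilityMeasure ν'] (hC : 1 < C) (h : EllipticStep ν η ν' C)
    {w ζ Φ Ψ : E → ℂ} (hw : Measurable w) (hζ : Measurable ζ) (hΦ : Measurable Φ)
    (hΨ : Measurable Ψ) (hw1 : ∀ y, ‖w y - 1‖ ≤ 1 / (10 * C)) (hζ2 : ∀ y, ‖ζ y‖ ≤ 2)
    {Z : Set E} (hZ : MeasurableSet Z) (hζZ : ∀ y, y ∉ Z → ζ y = 0)
    (hΦb : ∃ R, ∀ x, ‖Φ x‖ ≤ R) (hΨb : ∃ R, ∀ x, ‖Ψ x‖ ≤ R)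
    {c d : ℂ} {ρ : ℝ} (hc : c ≠ 0) (hρ : 0 ≤ ρ)
    (h₁ : ∀ᵐ y ∂ν', ‖Φ y - c‖ ≤ ‖c‖ / 4) (h₂ : ∀ᵐ y ∂ν', ‖Ψ y - d * Φ y‖ ≤ ρ * ‖c‖) :
    ∃ (c' d' : ℂ) (ρ' : ℝ), c' ≠ 0 ∧ 0 ≤ ρ' ∧
      (∀ᵐ x ∂ν, ‖kernelOp η (fun y => w y * Φ y) x - c'‖ ≤ ‖c'‖ / 4) ∧
      (∀ᵐ x ∂ν, ‖kernelOp η (fun y => (w y * (1 + ζ y)) * Ψ y) x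
        - d' * kernelOp η (fun y => w y * Φ y) x‖ ≤ ρ' * ‖c'‖) ∧
      ‖d'‖ + 10 * ρ' ≤ (1 + 50 * C * ν'.real Z) * (‖d‖ + 10 * ρ) := by
  have hC0 : 0 < C := by linarith
  obtain ⟨i, hi0, hi1, hiC⟩ : ∃ i : ℝ, 0 < i ∧ i < 1 ∧ i = C⁻¹ :=
    ⟨C⁻¹, inv_pos.2 hC0, inv_lt_one_of_one_lt₀ hC, rfl⟩
  have hiC' : C * i = 1 := by rw [hiC]; exact mul_inv_cancel₀ hC0.ne'
  have hτ : 1 / (10 * C) = i / 10 := by rw [hiC]; field_simp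
  rw [hτ] at hw1
  have hcpos : 0 < ‖c‖ := norm_pos_iff.2 hc
  have hq0 : 0 ≤ ν'.real Z := measureReal_nonneg
  have hwb : ∀ y, ‖w y‖ ≤ 1 + i / 10 := fun y => by
    calc ‖w y‖ = ‖1 + (w y - 1)‖ := by ring_nf
      _ ≤ 1 + i / 10 := (norm_add_le _ _).trans (by simpa using hw1 y)
  have hwb' : ∃ R, ∀ x, ‖w x‖ ≤ R := ⟨_, hwb⟩
  -- the first function
  obtain ⟨RΦ, hRΦ⟩ := hΦb
  have hwΦm : Measurable fun y => w y * Φ y := hw.mul hΦ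
  have hwΦb : ∃ R, ∀ x, ‖w x * Φ x‖ ≤ R := bounded_mul hwb' ⟨RΦ, hRΦ⟩
  have hv₁ : ∀ᵐ y ∂ν', ‖w y * Φ y - c‖ ≤ (1 / 4 + i / 8) * ‖c‖ := by
    filter_upwards [h₁] with y hy
    have hΦy : ‖Φ y‖ ≤ 5 / 4 * ‖c‖ := by
      calc ‖Φ y‖ = ‖(Φ y - c) + c‖ := by ring_nf
        _ ≤ ‖c‖ / 4 + ‖c‖ := (norm_add_le _ _).trans (by gcongr)
        _ = _ := by ring
    calc ‖w y * Φ y - c‖ = ‖(Φ y - c) + (w y - 1) * Φ y‖ := by ring_nf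
      _ ≤ ‖c‖ / 4 + i / 10 * (5 / 4 * ‖c‖) := by
        refine (norm_add_le _ _).trans (add_le_add hy ?_)
        rw [norm_mul]
        exact mul_le_mul (hw1 y) hΦy (norm_nonneg _) (by positivity)
      _ = _ := by ring
  have hsub : ∀ (θ : Measure E) [IsProbabilityMeasure θ], ∫ y, (w y * Φ y - c) ∂θ
      = (∫ y, w y * Φ y ∂θ) - c := fun θ _ => by
    rw [integral_sub (integrable_of_bounded hwΦm.stronglyMeasurable hwΦb) (integrable_const _)]
    simp
  have D₁ := h.doeblin hC (hwΦm.sub_const c)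
    (by obtain ⟨R, hR⟩ := hwΦb
        exact ⟨R + ‖c‖, fun x => (norm_sub_le _ _).trans (by gcongr; exact hR x)⟩) hv₁
  set m₁ : ℂ := ∫ y, (w y * Φ y - c) ∂ν' with hm₁
  have hm₁b : ‖m₁‖ ≤ (1 / 4 + i / 8) * ‖c‖ := by
    simpa using norm_integral_le_of_norm_le_const hv₁
  set c' : ℂ := c + (C : ℂ)⁻¹ * m₁ with hc'
  have hinv : ‖(C : ℂ)⁻¹‖ = i := by
    rw [norm_inv, Complex.norm_real, Real.norm_of_nonneg hC0.le, hiC]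
  have hc'low : (1 - 3 / 8 * i) * ‖c‖ ≤ ‖c'‖ := by
    have : ‖c‖ ≤ ‖c'‖ + i * ((1 / 4 + i / 8) * ‖c‖) := by
      calc ‖c‖ = ‖c' - (C : ℂ)⁻¹ * m₁‖ := by rw [hc']; ring_nf
        _ ≤ ‖c'‖ + ‖(C : ℂ)⁻¹ * m₁‖ := norm_sub_le _ _
        _ ≤ _ := by
          rw [norm_mul, hinv]
          gcongr
    have h3 : i * ((1 / 4 + i / 8) * ‖c‖) ≤ 3 / 8 * i * ‖c‖ := by
      nlinarith [mul_nonneg (mul_nonneg hi0.le hcpos.le) (sub_nonneg.2 hi1.le)]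
    linarith
  have hc'pos : 0 < ‖c'‖ := lt_of_lt_of_le (mul_pos (by linarith) hcpos) hc'low
  have hc'0 : c' ≠ 0 := norm_pos_iff.1 hc'pos
  have hΦ' : ∀ᵐ x ∂ν, ‖kernelOp η (fun y => w y * Φ y) x - c'‖ ≤ ‖c'‖ / 4 := by
    filter_upwards [D₁] with x hx
    have e : kernelOp η (fun y => w y * Φ y - c) x - (C : ℂ)⁻¹ * m₁
        = kernelOp η (fun y => w y * Φ y) x - c' := by
      rw [kernelOp, hsub, hc', kernelOp]; ring
    rw [e] at hx
    refine hx.trans ?_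
    rw [← hiC]
    nlinarith
  -- the second function
  have hdm : Measurable fun y => w y * (Ψ y - d * Φ y) := hw.mul (hΨ.sub (hΦ.const_mul d))
  obtain ⟨RΨ, hRΨ⟩ := hΨb
  have hdb : ∃ R, ∀ x, ‖w x * (Ψ x - d * Φ x)‖ ≤ R := by
    refine bounded_mul hwb' ⟨RΨ + ‖d‖ * RΦ, fun x => (norm_sub_le _ _).trans ?_⟩
    rw [norm_mul]
    exact add_le_add (hRΨ x) (by gcongr; exact hRΦ x)
  have hv₂ : ∀ᵐ y ∂ν', ‖w y * (Ψ y - d * Φ y)‖ ≤ (1 + i / 10) * (ρ * ‖c‖) := by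
    filter_upwards [h₂] with y hy
    rw [norm_mul]
    exact mul_le_mul (hwb y) hy (norm_nonneg _) (by positivity)
  have D₂ := h.doeblin hC hdm hdb hv₂
  set m₂ : ℂ := ∫ y, w y * (Ψ y - d * Φ y) ∂ν' with hm₂
  have hm₂b : ‖m₂‖ ≤ (1 + i / 10) * (ρ * ‖c‖) := by
    simpa using norm_integral_le_of_norm_le_const hv₂
  -- the defects
  have hzm : Measurable fun y => w y * ζ y * Ψ y := (hw.mul hζ).mul hΨ
  have hzb : ∃ R, ∀ x, ‖w x * ζ x * Ψ x‖ ≤ R := bounded_mul (bounded_mul hwb' ⟨2, hζ2⟩) ⟨RΨ, hRΨ⟩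
  have hz : ∀ᵐ y ∂ν', ‖w y * ζ y * Ψ y‖ ≤ Z.indicator (fun _ => 3 * (‖d‖ + ρ) * ‖c‖) y := by
    filter_upwards [h₁, h₂] with y hy₁ hy₂
    by_cases hyZ : y ∈ Z
    · rw [Set.indicator_of_mem hyZ, norm_mul, norm_mul]
      have hΦy : ‖Φ y‖ ≤ 5 / 4 * ‖c‖ := by
        calc ‖Φ y‖ = ‖(Φ y - c) + c‖ := by ring_nf
          _ ≤ ‖c‖ / 4 + ‖c‖ := (norm_add_le _ _).trans (by gcongr)
          _ = _ := by ring
      have hΨy : ‖Ψ y‖ ≤ ρ * ‖c‖ + ‖d‖ * (5 / 4 * ‖c‖) := by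
        calc ‖Ψ y‖ = ‖(Ψ y - d * Φ y) + d * Φ y‖ := by ring_nf
          _ ≤ _ := (norm_add_le _ _).trans (by rw [norm_mul]; gcongr)
      have : ‖w y‖ * ‖ζ y‖ ≤ 11 / 10 * 2 :=
        mul_le_mul ((hwb y).trans (by linarith)) (hζ2 y) (norm_nonneg _) (by norm_num)
      calc ‖w y‖ * ‖ζ y‖ * ‖Ψ y‖ ≤ 11 / 10 * 2 * (ρ * ‖c‖ + ‖d‖ * (5 / 4 * ‖c‖)) :=
            mul_le_mul this hΨy (norm_nonneg _) (by norm_num)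
        _ ≤ _ := by
          have := mul_nonneg hρ hcpos.le
          have := mul_nonneg (norm_nonneg d) hcpos.le
          nlinarith
    · rw [Set.indicator_of_notMem hyZ, hζZ y hyZ]
      simp
  have hzset : MeasurableSet {y | ‖w y * ζ y * Ψ y‖
      ≤ Z.indicator (fun _ => 3 * (‖d‖ + ρ) * ‖c‖) y} :=
    measurableSet_le hzm.norm (measurable_const.indicator hZ)
  have D₃ : ∀ᵐ x ∂ν, ‖kernelOp η (fun y => w y * ζ y * Ψ y) x‖
      ≤ C * ν'.real Z * (3 * (‖d‖ + ρ) * ‖c‖) := by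
    filter_upwards [h.ae_ae hzset hz, h Z hZ] with x hx hxZ
    have hη : (η x).real Z ≤ C * ν'.real Z := by
      have := ENNReal.toReal_mono (by finiteness) hxZ.1
      rwa [ENNReal.toReal_mul, ENNReal.toReal_ofReal hC0.le] at this
    calc ‖kernelOp η (fun y => w y * ζ y * Ψ y) x‖
        ≤ ∫ y, Z.indicator (fun _ => 3 * (‖d‖ + ρ) * ‖c‖) y ∂(η x) :=
          norm_integral_le_of_norm_le ((integrable_const _).indicator hZ) hx
      _ = (η x).real Z * (3 * (‖d‖ + ρ) * ‖c‖) := by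
          rw [integral_indicator_const _ hZ, smul_eq_mul]
      _ ≤ _ := by gcongr
  have hratio : ‖c‖ ≤ 8 / 5 * ‖c'‖ := by nlinarith
  refine ⟨c', d + (C : ℂ)⁻¹ * m₂ / c', (1 - i / 5) * ρ + 5 * C * ν'.real Z * (‖d‖ + ρ), hc'0,
    ?_, hΦ', ?_, ?_⟩
  · have : 0 ≤ (1 - i / 5) * ρ := mul_nonneg (by linarith) hρ
    positivity
  · filter_upwards [D₂, D₃, hΦ'] with x hx₂ hx₃ hx₁
    have e : kernelOp η (fun y => (w y * (1 + ζ y)) * Ψ y) x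
        = kernelOp η (fun y => w y * (Ψ y - d * Φ y)) x + d * kernelOp η (fun y => w y * Φ y) x
          + kernelOp η (fun y => w y * ζ y * Ψ y) x := by
      simp only [kernelOp]
      have j₁ : Integrable (fun y => w y * (Ψ y - d * Φ y)) (η x) :=
        integrable_of_bounded hdm.stronglyMeasurable hdb
      have j₂ : Integrable (fun y => w y * Φ y) (η x) :=
        integrable_of_bounded hwΦm.stronglyMeasurable hwΦb
      have j₃ : Integrable (fun y => w y * ζ y * Ψ y) (η x) :=
        integrable_of_bounded hzm.stronglyMeasurable hzb
      have j₄ : Integrable (fun y => d * (w y * Φ y)) (η x) := j₂.const_mul d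
      rw [← integral_const_mul, ← integral_add j₁ j₄,
        ← integral_add (f := fun y => w y * (Ψ y - d * Φ y) + d * (w y * Φ y)) (j₁.add j₄) j₃]
      congr 1
      ext y
      ring
    set T₁ := kernelOp η (fun y => w y * Φ y) x
    set T₂ := kernelOp η (fun y => w y * (Ψ y - d * Φ y)) x
    set T₃ := kernelOp η (fun y => w y * ζ y * Ψ y) x
    have e₂ : kernelOp η (fun y => (w y * (1 + ζ y)) * Ψ y) x
        - (d + (C : ℂ)⁻¹ * m₂ / c') * T₁
        = (T₂ - (C : ℂ)⁻¹ * m₂) - (C : ℂ)⁻¹ * m₂ * ((T₁ - c') / c') + T₃ := by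
      rw [e]
      field_simp
      ring
    rw [e₂]
    have hb₂ : ‖(C : ℂ)⁻¹ * m₂ * ((T₁ - c') / c')‖ ≤ i * ((1 + i / 10) * (ρ * ‖c‖)) * (1 / 4) := by
      rw [norm_mul, norm_mul, hinv, norm_div]
      exact mul_le_mul (by gcongr) (by rw [div_le_iff₀ hc'pos]; linarith) (by positivity)
        (by positivity)
    rw [← hiC] at hx₂
    have hfin : (1 - i) * ((1 + i / 10) * (ρ * ‖c‖)) + i * ((1 + i / 10) * (ρ * ‖c‖)) * (1 / 4)
        ≤ (1 - i / 5) * ρ * ‖c'‖ := by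
      have s₁ : (1 - i) * (1 + i / 10) + i * (1 + i / 10) * (1 / 4)
          ≤ (1 - i / 5) * (1 - 3 / 8 * i) := by nlinarith
      calc (1 - i) * ((1 + i / 10) * (ρ * ‖c‖)) + i * ((1 + i / 10) * (ρ * ‖c‖)) * (1 / 4)
          = ((1 - i) * (1 + i / 10) + i * (1 + i / 10) * (1 / 4)) * (ρ * ‖c‖) := by ring
        _ ≤ (1 - i / 5) * (1 - 3 / 8 * i) * (ρ * ‖c‖) := by gcongr
        _ = (1 - i / 5) * ρ * ((1 - 3 / 8 * i) * ‖c‖) := by ring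
        _ ≤ _ := mul_le_mul_of_nonneg_left hc'low (mul_nonneg (by linarith) hρ)
    have hfin₃ : C * ν'.real Z * (3 * (‖d‖ + ρ) * ‖c‖)
        ≤ 5 * C * ν'.real Z * (‖d‖ + ρ) * ‖c'‖ := by
      calc C * ν'.real Z * (3 * (‖d‖ + ρ) * ‖c‖)
          = C * ν'.real Z * (‖d‖ + ρ) * (3 * ‖c‖) := by ring
        _ ≤ C * ν'.real Z * (‖d‖ + ρ) * (5 * ‖c'‖) := by gcongr ?_ * ?_; linarith
        _ = _ := by ring
    have := (norm_add_le _ T₃).trans (add_le_add_left (norm_sub_le (T₂ - (C : ℂ)⁻¹ * m₂)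
      ((C : ℂ)⁻¹ * m₂ * ((T₁ - c') / c'))) ‖T₃‖)
    linarith
  · have hd' : ‖d + (C : ℂ)⁻¹ * m₂ / c'‖ ≤ ‖d‖ + 2 * i * ρ := by
      refine (norm_add_le _ _).trans ?_
      gcongr
      rw [norm_div, norm_mul, hinv, div_le_iff₀ hc'pos]
      calc i * ‖m₂‖ ≤ i * ((1 + i / 10) * (ρ * ‖c‖)) := by gcongr
        _ ≤ i * (11 / 10 * (ρ * (8 / 5 * ‖c'‖))) := by gcongr; linarith
        _ ≤ 2 * i * ρ * ‖c'‖ := by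
          have : 0 ≤ i * ρ * ‖c'‖ := by positivity
          nlinarith
    have : 0 ≤ C * ν'.real Z * ρ := by positivity
    nlinarith

/-- Iterating the cone estimate along a chain. -/
lemma exists_cone_backward {ν : ℕ → Measure E} {κ : ℕ → Kernel E E} {C : ℝ}
    [∀ n, IsMarkovKernel (κ n)] [∀ n, IsProbabilityMeasure (ν n)] (hC : 1 < C)
    (h : ∀ n, EllipticStep (ν n) (κ n) (ν (n + 1)) C)
    {w ζ : ℕ → E → ℂ} (hw : ∀ n, Measurable (w n)) (hζ : ∀ n, Measurable (ζ n))
    (hw1 : ∀ n y, ‖w n y - 1‖ ≤ 1 / (10 * C)) (hζ2 : ∀ n y, ‖ζ n y‖ ≤ 2)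
    {Z : ℕ → Set E} (hZ : ∀ n, MeasurableSet (Z n)) (hζZ : ∀ n y, y ∉ Z n → ζ n y = 0)
    (k n : ℕ) :
    ∃ (c d : ℂ) (ρ : ℝ), c ≠ 0 ∧ 0 ≤ ρ ∧
      (∀ᵐ x ∂(ν n), ‖backward κ w k n x - c‖ ≤ ‖c‖ / 4) ∧
      (∀ᵐ x ∂(ν n), ‖backward κ (fun n y => w n y * (1 + ζ n y)) k n x
        - d * backward κ w k n x‖ ≤ ρ * ‖c‖) ∧
      ‖d‖ + 10 * ρ ≤ Real.exp (50 * C * 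
        ∑ j ∈ Finset.range k, (ν (n + 1 + j)).real (Z (n + 1 + j))) := by
  have hwb : ∀ n, ∃ R, ∀ x, ‖w n x‖ ≤ R := fun n => ⟨1 + 1 / (10 * C), fun y => by
    calc ‖w n y‖ = ‖1 + (w n y - 1)‖ := by ring_nf
      _ ≤ _ := (norm_add_le _ _).trans (by simpa using hw1 n y)⟩
  have hwζb : ∀ n, ∃ R, ∀ x, ‖w n x * (1 + ζ n x)‖ ≤ R := fun n => bounded_mul (hwb n)
    ⟨1 + 2, fun x => (norm_add_le _ _).trans (add_le_add (by simp) (hζ2 n x))⟩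
  have hwζ : ∀ n, Measurable fun y => w n y * (1 + ζ n y) :=
    fun n => (hw n).mul ((hζ n).const_add 1)
  induction k generalizing n with
  | zero => exact ⟨1, 1, 0, by simp, le_rfl, by simp [backward], by simp [backward], by simp⟩
  | succ k ih =>
    obtain ⟨c, d, ρ, hc, hρ, h₁, h₂, hL⟩ := ih (n + 1)
    obtain ⟨c', d', ρ', hc', hρ', h₁', h₂', hL'⟩ := (h n).cone hC (hw (n + 1)) (hζ (n + 1))
      (measurable_backward κ hw k (n + 1)) (measurable_backward κ hwζ k (n + 1)) (hw1 _) (hζ2 _)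
      (hZ _) (hζZ _) (bounded_backward κ hwb k (n + 1)) (bounded_backward κ hwζb k (n + 1))
      hc hρ h₁ h₂
    refine ⟨c', d', ρ', hc', hρ', h₁', h₂', hL'.trans ?_⟩
    rw [Finset.sum_range_succ', mul_add (50 * C), Real.exp_add, mul_comm (Real.exp _)]
    have hs : ∑ j ∈ Finset.range k, (ν (n + 1 + (j + 1))).real (Z (n + 1 + (j + 1)))
        = ∑ j ∈ Finset.range k, (ν (n + 1 + 1 + j)).real (Z (n + 1 + 1 + j)) :=
      Finset.sum_congr rfl fun j _ => by rw [show n + 1 + (j + 1) = n + 1 + 1 + j by ring]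
    rw [hs, add_zero]
    refine mul_le_mul ?_ hL (by positivity) (Real.exp_pos _).le
    rw [add_comm]
    exact Real.add_one_le_exp _

/-- Comparison of a characteristic function with its perturbation by defects. -/
lemma norm_integral_backward_le {ν : ℕ → Measure E} {κ : ℕ → Kernel E E} {C : ℝ}
    [∀ n, IsMarkovKernel (κ n)] [∀ n, IsProbabilityMeasure (ν n)] (hC : 1 < C)
    (h : ∀ n, EllipticStep (ν n) (κ n) (ν (n + 1)) C)
    {w ζ : ℕ → E → ℂ} (hw : ∀ n, Measurable (w n)) (hζ : ∀ n, Measurable (ζ n))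
    (hw1 : ∀ n y, ‖w n y - 1‖ ≤ 1 / (10 * C)) (hζ2 : ∀ n y, ‖ζ n y‖ ≤ 2)
    {Z : ℕ → Set E} (hZ : ∀ n, MeasurableSet (Z n)) (hζZ : ∀ n y, y ∉ Z n → ζ n y = 0)
    (N : ℕ) :
    (∫ x, backward κ w N 0 x ∂(ν 0)) ≠ 0 ∧
    ‖∫ x, backward κ (fun n y => w n y * (1 + ζ n y)) N 0 x ∂(ν 0)‖
      ≤ 2 * Real.exp (50 * C * ∑ j ∈ Finset.range N, (ν (j + 1)).real (Z (j + 1)))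
        * ‖∫ x, backward κ w N 0 x ∂(ν 0)‖ := by
  have hwb : ∀ n, ∃ R, ∀ x, ‖w n x‖ ≤ R := fun n => ⟨1 + 1 / (10 * C), fun y => by
    calc ‖w n y‖ = ‖1 + (w n y - 1)‖ := by ring_nf
      _ ≤ _ := (norm_add_le _ _).trans (by simpa using hw1 n y)⟩
  obtain ⟨c, d, ρ, hc, hρ, h₁, h₂, hL⟩ := exists_cone_backward hC h hw hζ hw1 hζ2 hZ hζZ N 0
  have hs : ∀ j, 0 + 1 + j = j + 1 := fun j => by ring
  simp only [hs] at hL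
  have hcpos : 0 < ‖c‖ := norm_pos_iff.2 hc
  have hi : Integrable (backward κ w N 0) (ν 0) :=
    integrable_of_bounded (measurable_backward κ hw N 0).stronglyMeasurable
      (bounded_backward κ hwb N 0)
  have hlow : 3 / 4 * ‖c‖ ≤ ‖∫ x, backward κ w N 0 x ∂(ν 0)‖ := by
    have e : ‖∫ x, (backward κ w N 0 x - c) ∂(ν 0)‖ ≤ ‖c‖ / 4 := by
      simpa using norm_integral_le_of_norm_le_const h₁
    rw [integral_sub hi (integrable_const _)] at e
    simp only [integral_const, probReal_univ, one_smul] at e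
    have := norm_sub_norm_le c (∫ x, backward κ w N 0 x ∂(ν 0))
    rw [norm_sub_rev] at this
    linarith
  refine ⟨norm_pos_iff.1 (by linarith), ?_⟩
  have hup : ‖∫ x, backward κ (fun n y => w n y * (1 + ζ n y)) N 0 x ∂(ν 0)‖
      ≤ ρ * ‖c‖ + ‖d‖ * (5 / 4 * ‖c‖) := by
    have : ∀ᵐ x ∂(ν 0), ‖backward κ (fun n y => w n y * (1 + ζ n y)) N 0 x‖
        ≤ ρ * ‖c‖ + ‖d‖ * (5 / 4 * ‖c‖) := by
      filter_upwards [h₁, h₂] with y hy₁ hy₂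
      have hΦy : ‖backward κ w N 0 y‖ ≤ 5 / 4 * ‖c‖ := by
        calc ‖backward κ w N 0 y‖ = ‖(backward κ w N 0 y - c) + c‖ := by ring_nf
          _ ≤ ‖c‖ / 4 + ‖c‖ := (norm_add_le _ _).trans (by gcongr)
          _ = _ := by ring
      calc ‖backward κ (fun n y => w n y * (1 + ζ n y)) N 0 y‖
          = ‖(backward κ (fun n y => w n y * (1 + ζ n y)) N 0 y - d * backward κ w N 0 y)
            + d * backward κ w N 0 y‖ := by ring_nf
        _ ≤ _ := (norm_add_le _ _).trans (by rw [norm_mul]; gcongr)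
    simpa using norm_integral_le_of_norm_le_const this
  have hd0 := norm_nonneg d
  calc _ ≤ ρ * ‖c‖ + ‖d‖ * (5 / 4 * ‖c‖) := hup
    _ ≤ 2 * (‖d‖ + 10 * ρ) * (3 / 4 * ‖c‖) := by
      have := mul_nonneg hρ hcpos.le
      have := mul_nonneg hd0 hcpos.le
      nlinarith
    _ ≤ _ := by gcongr

/-- Two consecutive elliptic steps contract the sup norm by an amount proportional to the
probability that the weight of the middle state deviates from its dominant value. -/
lemma EllipticStep.norm_two_step_le {ν₀ ν₁ ν₂ : Measure E} {η₁ η₂ : Kernel E E} {C : ℝ}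
    [IsMarkovKernel η₁] [IsMarkovKernel η₂] [IsProbabilityMeasure ν₁] [IsProbabilityMeasure ν₂]
    (hC : 1 < C) (h₁ : EllipticStep ν₀ η₁ ν₁ C) (h₂ : EllipticStep ν₁ η₂ ν₂ C)
    {g w : E → ℂ} (hg : Measurable g) (hw : Measurable w) (hg1 : ∀ y, ‖g y‖ = 1)
    (hwb : ∃ R, ∀ y, ‖w y‖ ≤ R) (hw1 : ∀ᵐ y ∂ν₂, ‖w y‖ ≤ 1)
    {Z : Set E} (hZ : MeasurableSet Z) {g₀ : ℂ} {s p : ℝ}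
    (hs0 : 0 < s) (hs2 : s ≤ 2) (hgZ : ∀ y ∈ Z, s ≤ ‖g y - g₀‖) (hgZ' : ∀ y ∉ Z, g y = g₀)
    (hp0 : 0 < p) (hp : p ≤ 1 - ν₁.real Z) :
    ∀ᵐ x ∂ν₀, ‖kernelOp η₁ (fun y => g y * kernelOp η₂ w y) x‖
      ≤ 1 - p * s ^ 4 / (512 * C ^ 2) * ν₁.real Z := by
  have hC0 : 0 < C := by linarith
  have hq0 : 0 ≤ ν₁.real Z := measureReal_nonneg
  have hq1 : ν₁.real Z ≤ 1 := measureReal_le_one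
  have hp1 : p ≤ 1 := by linarith
  have hs22 : s ^ 2 ≤ 4 := by nlinarith
  have hGm : Measurable (kernelOp η₂ w) := measurable_kernelOp _ hw
  have hwset : MeasurableSet {y | ‖w y‖ ≤ 1} := measurableSet_le hw.norm measurable_const
  have hG1 : ∀ᵐ y ∂ν₁, ‖kernelOp η₂ w y‖ ≤ 1 := by
    filter_upwards [h₂.ae_ae hwset hw1] with y hy
    simpa [kernelOp] using norm_integral_le_of_norm_le_const hy
  have hpq : p * ν₁.real Z ≤ 1 := by nlinarith
  have hconst : p * s ^ 4 / (512 * C ^ 2) * ν₁.real Z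
      = (s ^ 4 / (512 * C ^ 2)) * (p * ν₁.real Z) := by ring
  rw [hconst]
  set I : ℂ := ∫ y, w y ∂ν₂ with hI
  by_cases hIs : ‖I‖ ≤ 1 - s ^ 4 / (512 * C)
  · have hGs : ∀ᵐ y ∂ν₁, ‖kernelOp η₂ w y‖ ≤ 1 - s ^ 4 / (512 * C ^ 2) := by
      filter_upwards [h₂.doeblin hC hw hwb hw1] with y hy
      have e : ‖(C : ℂ)⁻¹ * I‖ ≤ C⁻¹ * (1 - s ^ 4 / (512 * C)) := by
        rw [norm_mul, norm_inv, Complex.norm_real, Real.norm_of_nonneg hC0.le]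
        gcongr
      calc ‖kernelOp η₂ w y‖ = ‖(kernelOp η₂ w y - (C : ℂ)⁻¹ * I) + (C : ℂ)⁻¹ * I‖ := by ring_nf
        _ ≤ (1 - C⁻¹) * 1 + C⁻¹ * (1 - s ^ 4 / (512 * C)) :=
          (norm_add_le _ _).trans (add_le_add hy e)
        _ = _ := by field_simp; ring
    filter_upwards [h₁.ae_ae (measurableSet_le hGm.norm measurable_const) hGs] with x hx
    have : ‖kernelOp η₁ (fun y => g y * kernelOp η₂ w y) x‖ ≤ 1 - s ^ 4 / (512 * C ^ 2) := by
      have := norm_integral_le_of_norm_le_const (μ := η₁ x)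
        (f := fun y => g y * kernelOp η₂ w y) (C := 1 - s ^ 4 / (512 * C ^ 2))
        (hx.mono fun y hy => by rw [norm_mul, hg1, one_mul]; exact hy)
      simpa [kernelOp] using this
    have h3 : s ^ 4 / (512 * C ^ 2) * (p * ν₁.real Z) ≤ s ^ 4 / (512 * C ^ 2) * 1 := by gcongr
    linarith
  · push Not at hIs
    have hI0 : I ≠ 0 := by
      intro h0
      rw [h0, norm_zero] at hIs
      have : s ^ 4 / (512 * C) < 1 := by
        rw [div_lt_one (by positivity)]
        nlinarith [sq_nonneg (s ^ 2)]
      linarith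
    obtain ⟨a, ha1, haI⟩ : ∃ a : ℂ, ‖a‖ = 1 ∧ a * I = ‖I‖ := by
      refine ⟨(starRingEnd ℂ) I / ‖I‖, by simp [hI0], ?_⟩
      have : (‖I‖ : ℂ) ≠ 0 := by simpa using hI0
      rw [div_mul_eq_mul_div, Complex.conj_mul']
      field_simp
    have hint : ∀ (θ : Measure E) [IsProbabilityMeasure θ], Integrable w θ := fun θ _ =>
      integrable_of_bounded hw.stronglyMeasurable hwb
    have hre : ∀ (θ : Measure E) [IsProbabilityMeasure θ],
        ∫ y, (1 - (a * w y).re) ∂θ = 1 - (a * ∫ y, w y ∂θ).re := fun θ _ => by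
      have hi : Integrable (fun y => (a * w y).re) θ := ((hint θ).const_mul a).re
      rw [integral_sub (integrable_const _) hi, ← integral_const_mul]
      have := integral_re (𝕜 := ℂ) ((hint θ).const_mul a)
      simp only [RCLike.re_to_complex] at this
      rw [this]
      simp
    have hlowpos : ∀ᵐ y ∂ν₂, 0 ≤ 1 - (a * w y).re := by
      filter_upwards [hw1] with y hy
      have := (Complex.re_le_norm (a * w y))
      rw [norm_mul, ha1, one_mul] at this
      linarith
    have hmre : Measurable fun y => 1 - (a * w y).re := by fun_prop
    have hbre : ∃ R, ∀ y, ‖1 - (a * w y).re‖ ≤ R := by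
      obtain ⟨R, hR⟩ := hwb
      refine ⟨1 + R, fun y => (norm_sub_le _ _).trans ?_⟩
      rw [norm_one]
      gcongr
      exact (Complex.abs_re_le_norm _).trans (by rw [norm_mul, ha1, one_mul]; exact hR y)
    have hclose : ∀ᵐ y ∂ν₁, ‖1 - a * kernelOp η₂ w y‖ ≤ s ^ 2 / 16 := by
      filter_upwards [h₂.integral hC0.le hmre hbre hlowpos, hG1] with y hy hy1
      have e := hy.2.1
      rw [hre, hre, ← hI, haI, Complex.ofReal_re] at e
      change 1 - (a * kernelOp η₂ w y).re ≤ _ at e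
      have e2 : C * (1 - ‖I‖) ≤ s ^ 4 / 512 := by
        have : C * (1 - ‖I‖) ≤ C * (s ^ 4 / (512 * C)) := by gcongr; linarith
        rwa [show C * (s ^ 4 / (512 * C)) = s ^ 4 / 512 by field_simp] at this
      have n1 : ‖a * kernelOp η₂ w y‖ ≤ 1 := by rw [norm_mul, ha1, one_mul]; exact hy1
      set z := a * kernelOp η₂ w y
      have n2 : ‖1 - z‖ ^ 2 ≤ (s ^ 2 / 16) ^ 2 := by
        have e3 : ‖1 - z‖ ^ 2 = 1 - 2 * z.re + ‖z‖ ^ 2 := by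
          rw [Complex.sq_norm, Complex.sq_norm, Complex.normSq_apply, Complex.normSq_apply]
          simp
          ring
        have : ‖z‖ ^ 2 ≤ 1 := pow_le_one₀ (norm_nonneg _) n1
        rw [e3]
        nlinarith
      exact le_of_sq_le_sq n2 (by positivity)
    have hset : MeasurableSet {y | ‖1 - a * kernelOp η₂ w y‖ ≤ s ^ 2 / 16 ∧
        ‖kernelOp η₂ w y‖ ≤ 1} :=
      (measurableSet_le (measurable_const.sub (hGm.const_mul a)).norm measurable_const).inter
        (measurableSet_le hGm.norm measurable_const)
    filter_upwards [h₁.ae_ae hset (hclose.and hG1), h₁ Z hZ, h₁ Zᶜ hZ.compl] with x hx hxZ hxZ'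
    have key : ∀ W : Set E, MeasurableSet W → ν₁ W ≤ ENNReal.ofReal C * η₁ x W →
        ν₁.real W ≤ C * (η₁ x).real W := fun W _ hW => by
      have := ENNReal.toReal_mono (by finiteness) hW
      rwa [ENNReal.toReal_mul, ENNReal.toReal_ofReal hC0.le] at this
    have kZ := key Z hZ hxZ.2
    have kZ' := key Zᶜ hZ.compl hxZ'.2
    rw [probReal_compl_eq_one_sub hZ] at kZ'
    refine norm_le_of_forall_re_le fun e he => ?_
    have hinvc : Integrable (fun y => g y * kernelOp η₂ w y) (η₁ x) := by
      refine Integrable.of_bound (hg.mul hGm).aestronglyMeasurable 1 (hx.mono fun y hy => ?_)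
      rw [norm_mul, hg1, one_mul]
      exact hy.2
    have bound : ∀ W : Set E, MeasurableSet W → p * ν₁.real Z ≤ C * (η₁ x).real W →
        (∀ y ∈ W, s / 2 ≤ ‖1 - e * (starRingEnd ℂ) a * g y‖) →
        (e * kernelOp η₁ (fun y => g y * kernelOp η₂ w y) x).re
          ≤ 1 - s ^ 4 / (512 * C ^ 2) * (p * ν₁.real Z) := by
      intro W hW hpW hWs
      have pt : ∀ᵐ y ∂(η₁ x), (e * (g y * kernelOp η₂ w y)).re
          ≤ 1 - W.indicator (fun _ => s ^ 2 / 16) y := by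
        filter_upwards [hx] with y hy
        by_cases hyW : y ∈ W
        · rw [Set.indicator_of_mem hyW]
          set b := e * (starRingEnd ℂ) a * g y with hb
          have hb1 : ‖b‖ = 1 := by
            rw [hb, norm_mul, norm_mul, he, hg1, RCLike.norm_conj, ha1]; norm_num
          have haa : (starRingEnd ℂ) a * a = 1 := by rw [Complex.conj_mul', ha1]; simp
          have e1 : e * (g y * kernelOp η₂ w y) = b - b * (1 - a * kernelOp η₂ w y) := by
            rw [hb]
            linear_combination (-e * g y * kernelOp η₂ w y) * haa
          have e2 : ‖1 - b‖ ^ 2 = 2 - 2 * b.re := by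
            have : ‖b‖ ^ 2 = 1 := by rw [hb1]; norm_num
            rw [Complex.sq_norm, Complex.normSq_apply] at this ⊢
            simp
            linarith
          have e3 : (s / 2) ^ 2 ≤ ‖1 - b‖ ^ 2 := by gcongr; exact hWs y hyW
          have e4 : -(b * (1 - a * kernelOp η₂ w y)).re ≤ s ^ 2 / 16 := by
            refine (neg_le_abs _).trans ((Complex.abs_re_le_norm _).trans ?_)
            rw [norm_mul, hb1, one_mul]
            exact hy.1
          rw [e1, Complex.sub_re]
          nlinarith
        · rw [Set.indicator_of_notMem hyW, sub_zero]
          refine (Complex.re_le_norm _).trans ?_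
          rw [norm_mul, norm_mul, he, hg1, one_mul, one_mul]
          exact hy.2
      have hrw : (e * kernelOp η₁ (fun y => g y * kernelOp η₂ w y) x).re
          = ∫ y, (e * (g y * kernelOp η₂ w y)).re ∂(η₁ x) := by
        have := integral_re (𝕜 := ℂ) (hinvc.const_mul e)
        simp only [RCLike.re_to_complex] at this
        rw [this, integral_const_mul, kernelOp]
      have hi2 : Integrable (fun y => W.indicator (fun _ => s ^ 2 / 16) y) (η₁ x) :=
        (integrable_const _).indicator hW
      have hmono := integral_mono_ae (hinvc.const_mul e).re ((integrable_const 1).sub hi2) pt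
      simp only [RCLike.re_to_complex, Pi.sub_apply] at hmono
      rw [integral_sub (integrable_const _) hi2, integral_indicator_const _ hW] at hmono
      rw [hrw]
      refine hmono.trans ?_
      simp only [integral_const, probReal_univ, smul_eq_mul, mul_one, one_mul]
      have : s ^ 4 / (512 * C ^ 2) * (p * ν₁.real Z)
          ≤ s ^ 4 / (512 * C ^ 2) * (C * (η₁ x).real W) := by gcongr
      have h5 : s ^ 4 / (512 * C ^ 2) * (C * (η₁ x).real W) ≤ s ^ 2 / 16 * (η₁ x).real W := by
        rw [show s ^ 4 / (512 * C ^ 2) * (C * (η₁ x).real W)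
          = s ^ 4 / (512 * C) * (η₁ x).real W by field_simp]
        refine mul_le_mul_of_nonneg_right ?_ measureReal_nonneg
        rw [div_le_div_iff₀ (by positivity) (by norm_num)]
        nlinarith [mul_nonneg (sq_nonneg s) (sub_nonneg.2 hs22),
          mul_nonneg (sq_nonneg s) (sub_nonneg.2 hC.le)]
      linarith
    by_cases hcase : s / 2 ≤ ‖1 - e * (starRingEnd ℂ) a * g₀‖
    · exact bound Zᶜ hZ.compl (by nlinarith) fun y hy => by rwa [hgZ' y hy]
    · refine bound Z hZ (by nlinarith) fun y hy => ?_
      push Not at hcase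
      have e1 : e * (starRingEnd ℂ) a * (g y - g₀)
          = (1 - e * (starRingEnd ℂ) a * g₀) - (1 - e * (starRingEnd ℂ) a * g y) := by ring
      have e2 : ‖e * (starRingEnd ℂ) a * (g y - g₀)‖ = ‖g y - g₀‖ := by
        rw [norm_mul, norm_mul, he, RCLike.norm_conj, ha1]; norm_num
      have e3 := norm_sub_le (1 - e * (starRingEnd ℂ) a * g₀) (1 - e * (starRingEnd ℂ) a * g y)
      rw [← e1, e2] at e3
      linarith [hgZ y hy]

/-- Joint decay of the backward iterates over `k + 1` and over `k` steps. -/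
lemma exists_decay_backward {ν : ℕ → Measure E} {κ : ℕ → Kernel E E} {C : ℝ}
    [∀ n, IsMarkovKernel (κ n)] [∀ n, IsProbabilityMeasure (ν n)] (hC : 1 < C)
    (h : ∀ n, EllipticStep (ν n) (κ n) (ν (n + 1)) C)
    {g : ℕ → E → ℂ} (hg : ∀ n, Measurable (g n)) (hg1 : ∀ n y, ‖g n y‖ = 1)
    {Z : ℕ → Set E} (hZ : ∀ n, MeasurableSet (Z n)) {g₀ : ℕ → ℂ}
    {s p : ℝ} (hs0 : 0 < s) (hs2 : s ≤ 2) (hgZ : ∀ n, ∀ y ∈ Z n, s ≤ ‖g n y - g₀ n‖)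
    (hgZ' : ∀ n, ∀ y ∉ Z n, g n y = g₀ n)
    (hp0 : 0 < p) (hp : ∀ n, p ≤ 1 - (ν n).real (Z n)) (k n : ℕ) :
    ∃ b b' : ℝ, 0 < b ∧ b ≤ b' ∧ (∀ᵐ x ∂(ν n), ‖backward κ g (k + 1) n x‖ ≤ b) ∧
      (∀ᵐ x ∂(ν (n + 1)), ‖backward κ g k (n + 1) x‖ ≤ b') ∧
      b * b' ≤ Real.exp (-(p * s ^ 4 / (512 * C ^ 2) *
        ∑ j ∈ Finset.range k, (ν (n + 1 + j)).real (Z (n + 1 + j)))) := by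
  have hC0 : 0 < C := by linarith
  have hgb : ∀ n, ∃ R, ∀ x, ‖g n x‖ ≤ R := fun n => ⟨1, fun x => (hg1 n x).le⟩
  induction k generalizing n with
  | zero =>
    refine ⟨1, 1, one_pos, le_rfl, ae_of_all _ fun x => ?_, by simp [backward], by simp⟩
    exact norm_kernelOp_le (κ n) (fun y => by simp [backward, hg1]) x
  | succ k ih =>
    obtain ⟨b, b', hb0, hbb, h₁, h₂, hprod⟩ := ih (n + 1)
    have hb'0 : 0 < b' := hb0.trans_le hbb
    set q := (ν (n + 1)).real (Z (n + 1)) with hq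
    set c := p * s ^ 4 / (512 * C ^ 2) with hc
    have hq0 : 0 ≤ q := measureReal_nonneg
    have hq1 : q ≤ 1 := measureReal_le_one
    have hc0 : 0 < c := by positivity
    have hp1 : p ≤ 1 := by linarith [hp (n + 1)]
    have hc1 : c < 1 := by
      rw [hc, div_lt_one (by positivity)]
      have : s ^ 4 ≤ 2 ^ 4 := by gcongr
      nlinarith
    have hx0 : 0 < 1 - c * q := by nlinarith
    have hone : ∀ᵐ x ∂(ν n), ‖backward κ g (k + 1 + 1) n x‖ ≤ b := by
      filter_upwards [(h n).ae_ae (measurableSet_le (measurable_backward κ hg (k + 1) (n + 1)).norm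
        measurable_const) h₁] with x hx
      have := norm_integral_le_of_norm_le_const (μ := κ n x)
        (f := fun y => g (n + 1) y * backward κ g (k + 1) (n + 1) y) (C := b)
        (hx.mono fun y hy => by rw [norm_mul, hg1, one_mul]; exact hy)
      simpa [backward, kernelOp] using this
    have htwo : ∀ᵐ x ∂(ν n), ‖backward κ g (k + 1 + 1) n x‖ ≤ (1 - c * q) * b' := by
      have hm := (hg (n + 1 + 1)).mul (measurable_backward κ hg k (n + 1 + 1))
      have hwm : Measurable fun y => (b' : ℂ)⁻¹ * (g (n + 1 + 1) y * backward κ g k (n + 1 + 1) y) :=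
        hm.const_mul _
      have hwb : ∃ R, ∀ y, ‖(b' : ℂ)⁻¹ * (g (n + 1 + 1) y * backward κ g k (n + 1 + 1) y)‖ ≤ R :=
        bounded_mul ⟨_, fun _ => le_rfl⟩
          (bounded_mul (hgb (n + 1 + 1)) (bounded_backward κ hgb k (n + 1 + 1)))
      have hw1 : ∀ᵐ y ∂(ν (n + 1 + 1)),
          ‖(b' : ℂ)⁻¹ * (g (n + 1 + 1) y * backward κ g k (n + 1 + 1) y)‖ ≤ 1 := by
        filter_upwards [h₂] with y hy
        rw [norm_mul, norm_mul, hg1, one_mul, norm_inv, Complex.norm_real,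
          Real.norm_of_nonneg hb'0.le, inv_mul_le_iff₀ hb'0, mul_one]
        exact hy
      filter_upwards [(h n).norm_two_step_le hC (h (n + 1)) (hg (n + 1)) hwm (hg1 _) hwb hw1
        (hZ (n + 1)) hs0 hs2 (hgZ _) (hgZ' _) hp0 (hp _)] with x hx
      have hb'c : (b' : ℂ) ≠ 0 := by exact_mod_cast hb'0.ne'
      have e : backward κ g (k + 1 + 1) n x = b' * kernelOp (κ n) (fun y => g (n + 1) y *
          kernelOp (κ (n + 1)) (fun y => (b' : ℂ)⁻¹ *
            (g (n + 1 + 1) y * backward κ g k (n + 1 + 1) y)) y) x := by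
        simp only [backward, kernelOp]
        rw [← integral_const_mul]
        refine integral_congr_ae (ae_of_all _ fun y => ?_)
        simp only
        rw [integral_const_mul]
        field_simp
      rw [e, norm_mul, Complex.norm_real, Real.norm_of_nonneg hb'0.le, mul_comm]
      gcongr
    refine ⟨min b ((1 - c * q) * b'), b, by positivity, min_le_left _ _, ?_, h₁, ?_⟩
    · filter_upwards [hone, htwo] with x hx₁ hx₂
      exact le_min hx₁ hx₂
    · have hs : ∑ j ∈ Finset.range k, (ν (n + 1 + (j + 1))).real (Z (n + 1 + (j + 1)))
          = ∑ j ∈ Finset.range k, (ν (n + 1 + 1 + j)).real (Z (n + 1 + 1 + j)) :=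
        Finset.sum_congr rfl fun j _ => by rw [show n + 1 + (j + 1) = n + 1 + 1 + j by ring]
      rw [Finset.sum_range_succ', hs, add_zero, ← hq, mul_add, neg_add, Real.exp_add]
      calc min b ((1 - c * q) * b') * b ≤ ((1 - c * q) * b') * b := by
            gcongr
            exact min_le_right _ _
        _ = (b * b') * (1 - c * q) := by ring
        _ ≤ _ := mul_le_mul hprod (by linarith [Real.add_one_le_exp (-(c * q))]) hx0.le
            (Real.exp_pos _).le

/-- Decay of a characteristic function at a frequency where the weights deviate from constants. -/
lemma norm_integral_backward_le_exp {ν : ℕ → Measure E} {κ : ℕ → Kernel E E} {C : ℝ}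
    [∀ n, IsMarkovKernel (κ n)] [∀ n, IsProbabilityMeasure (ν n)] (hC : 1 < C)
    (h : ∀ n, EllipticStep (ν n) (κ n) (ν (n + 1)) C)
    {g : ℕ → E → ℂ} (hg : ∀ n, Measurable (g n)) (hg1 : ∀ n y, ‖g n y‖ = 1)
    {Z : ℕ → Set E} (hZ : ∀ n, MeasurableSet (Z n)) {g₀ : ℕ → ℂ}
    {s p : ℝ} (hs0 : 0 < s) (hs2 : s ≤ 2) (hgZ : ∀ n, ∀ y ∈ Z n, s ≤ ‖g n y - g₀ n‖)
    (hgZ' : ∀ n, ∀ y ∉ Z n, g n y = g₀ n)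
    (hp0 : 0 < p) (hp : ∀ n, p ≤ 1 - (ν n).real (Z n)) (N : ℕ) :
    ‖∫ x, backward κ g N 0 x ∂(ν 0)‖ ≤ Real.exp (p * s ^ 4 / (512 * C ^ 2) / 2
      * (1 - ∑ j ∈ Finset.range N, (ν (j + 1)).real (Z (j + 1)))) := by
  have hC0 : 0 < C := by linarith
  set c := p * s ^ 4 / (512 * C ^ 2) with hc
  have hc0 : 0 < c := by positivity
  cases N with
  | zero =>
    simp [backward]
    positivity
  | succ k =>
    obtain ⟨b, b', hb0, hbb, h₁, h₂, hprod⟩ := exists_decay_backward hC h hg hg1 hZ hs0 hs2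
      hgZ hgZ' hp0 hp k 0
    have hs : ∀ j, 0 + 1 + j = j + 1 := fun j => by ring
    simp only [hs, ← hc] at hprod
    have hb : ‖∫ x, backward κ g (k + 1) 0 x ∂(ν 0)‖ ≤ b := by
      simpa using norm_integral_le_of_norm_le_const h₁
    refine hb.trans (le_of_sq_le_sq ?_ (Real.exp_pos _).le)
    calc b ^ 2 ≤ b * b' := by rw [sq]; gcongr
      _ ≤ _ := hprod
      _ ≤ _ := by
        rw [← Real.exp_nat_mul, Finset.sum_range_succ]
        refine Real.exp_le_exp.2 ?_
        have : (ν (k + 1)).real (Z (k + 1)) ≤ 1 := measureReal_le_one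
        push_cast
        nlinarith

/-- A bounded holomorphic function is close to a polynomial near the centre of the disc. -/
lemma exists_taylor_bound (D : ℕ) {R : ℝ} (hR : 0 < R) {f : ℂ → ℂ} {B : ℝ}
    (hf : DifferentiableOn ℂ f (Metric.ball 0 R)) (hB : ∀ z ∈ Metric.ball (0 : ℂ) R, ‖f z‖ ≤ B) :
    ∃ c : ℕ → ℂ, ∀ z ∈ Metric.ball (0 : ℂ) R,
      ‖f z - ∑ k ∈ Finset.range D, c k * z ^ k‖ ≤ B * (2 * ‖z‖ / R) ^ D := by
  induction D generalizing f B with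
  | zero => exact ⟨0, fun z hz => by simpa using hB z hz⟩
  | succ D ih =>
    have h0 : (0 : ℂ) ∈ Metric.ball (0 : ℂ) R := Metric.mem_ball_self hR
    have hg : DifferentiableOn ℂ (dslope f 0) (Metric.ball 0 R) :=
      (Complex.differentiableOn_dslope (Metric.isOpen_ball.mem_nhds h0)).2 hf
    have hgB : ∀ z ∈ Metric.ball (0 : ℂ) R, ‖dslope f 0 z‖ ≤ 2 * B / R := fun z hz =>
      Complex.norm_dslope_le_div_of_mapsTo_ball hf (fun y hy => by
        rw [Metric.mem_closedBall, dist_eq_norm]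
        linarith [norm_sub_le (f y) (f 0), hB y hy, hB 0 h0]) hz
    obtain ⟨c, hc⟩ := ih hg hgB
    refine ⟨fun k => Nat.casesOn k (f 0) c, fun z hz => ?_⟩
    have e : f z = f 0 + z * dslope f 0 z := by
      have := sub_smul_dslope f 0 z
      rw [sub_zero, smul_eq_mul] at this
      rw [this]
      ring
    rw [Finset.sum_range_succ']
    have e₂ : f z - (∑ k ∈ Finset.range D, c k * z ^ (k + 1) + f 0 * z ^ 0)
        = z * (dslope f 0 z - ∑ k ∈ Finset.range D, c k * z ^ k) := by
      rw [mul_sub, Finset.mul_sum, e]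
      have : ∀ k, z * (c k * z ^ k) = c k * z ^ (k + 1) := fun k => by ring
      simp only [this]
      ring
    calc ‖f z - (∑ k ∈ Finset.range D, c k * z ^ (k + 1) + f 0 * z ^ 0)‖
        = ‖z‖ * ‖dslope f 0 z - ∑ k ∈ Finset.range D, c k * z ^ k‖ := by rw [e₂, norm_mul]
      _ ≤ ‖z‖ * (2 * B / R * (2 * ‖z‖ / R) ^ D) := by gcongr; exact hc z hz
      _ = _ := by ring

lemma exists_extrapolation_weights (D : ℕ) :
    ∃ a : ℕ → ℝ, ∀ k < D,
      ∑ j ∈ Finset.range D, a j * (((j : ℝ) + 1) / D) ^ k = if k = 0 then 1 else 0 := by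
  refine ⟨fun j => (Lagrange.basis (Finset.range D) (fun i : ℕ => ((i : ℝ) + 1) / D) j).eval 0,
    fun k hk => ?_⟩
  have hD : (D : ℝ) ≠ 0 := by
    have : 0 < D := by omega
    positivity
  have hinj : Set.InjOn (fun i : ℕ => ((i : ℝ) + 1) / D) (Finset.range D : Set ℕ) := by
    intro i _ j _ hij
    simp only [div_left_inj' hD, add_left_inj] at hij
    exact_mod_cast hij
  have hdeg : (Polynomial.X ^ k : Polynomial ℝ).degree < ((Finset.range D).card : ℕ) := by
    rw [Polynomial.degree_X_pow, Finset.card_range]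
    exact_mod_cast hk
  have := congrArg (Polynomial.eval 0) (Lagrange.eq_interpolate hinj hdeg)
  rw [Lagrange.interpolate_apply, Polynomial.eval_finsetSum] at this
  simp only [Polynomial.eval_mul, Polynomial.eval_C, Polynomial.eval_pow, Polynomial.eval_X]
    at this
  rw [zero_pow_eq] at this
  rw [this]
  exact Finset.sum_congr rfl fun j _ => mul_comm _ _

/-- The value at the centre is controlled by smooth averages along a radius. -/
lemma norm_apply_zero_le_averages (D : ℕ) {a : ℕ → ℝ}
    (ha : ∀ k < D, ∑ j ∈ Finset.range D, a j * (((j : ℝ) + 1) / D) ^ k = if k = 0 then 1 else 0)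
    {η : ℝ → ℝ} (hη : Continuous η) (hη0 : ∀ s ∈ Set.Icc (0 : ℝ) 1, 0 ≤ η s)
    (hη1 : ∫ s in (0 : ℝ)..1, η s = 1) {R : ℝ} (hR : 1 < R) {f : ℂ → ℂ} {B : ℝ}
    (hf : DifferentiableOn ℂ f (Metric.ball 0 R)) (hB : ∀ z ∈ Metric.ball (0 : ℂ) R, ‖f z‖ ≤ B) :
    ‖f 0‖ ≤ ∑ j ∈ Finset.range D,
        |a j| * ‖∫ s in (0 : ℝ)..1, (η s : ℂ) * f ((((j : ℝ) + 1) / D * s : ℝ))‖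
      + (1 + ∑ j ∈ Finset.range D, |a j|) * (B * (2 / R) ^ D) := by
  have hR0 : 0 < R := by linarith
  obtain ⟨c, hc⟩ := exists_taylor_bound D hR0 hf hB
  have hB0 : 0 ≤ B := (norm_nonneg _).trans (hB 0 (Metric.mem_ball_self hR0))
  set P : ℂ → ℂ := fun z => ∑ k ∈ Finset.range D, c k * z ^ k with hP
  have hPc : Continuous P := by fun_prop
  have hc1 : ∀ x : ℝ, x ∈ Set.Icc (0 : ℝ) 1 → (x : ℂ) ∈ Metric.ball (0 : ℂ) R ∧
      ‖f x - P x‖ ≤ B * (2 / R) ^ D := fun x hx => by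
    have hxn : ‖(x : ℂ)‖ = x := by rw [Complex.norm_real, Real.norm_of_nonneg hx.1]
    have hm : (x : ℂ) ∈ Metric.ball (0 : ℂ) R := by
      rw [mem_ball_zero_iff, hxn]
      linarith [hx.2]
    refine ⟨hm, (hc x hm).trans ?_⟩
    rw [hxn]
    have := hx.1
    gcongr
    linarith [hx.2]
  have hlam : ∀ j ∈ Finset.range D, ∀ s ∈ Set.Icc (0 : ℝ) 1,
      ((j : ℝ) + 1) / D * s ∈ Set.Icc (0 : ℝ) 1 := fun j hj s hs => by
    have hj' : (j : ℝ) + 1 ≤ D := by exact_mod_cast Finset.mem_range.1 hj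
    have h1 : ((j : ℝ) + 1) / D ≤ 1 := div_le_one_of_le₀ hj' (by positivity)
    have h0 : 0 ≤ ((j : ℝ) + 1) / D := by positivity
    exact ⟨mul_nonneg h0 hs.1, by nlinarith [hs.1, hs.2]⟩
  have hmom : ∑ j ∈ Finset.range D, (a j : ℂ) *
      ∫ s in (0 : ℝ)..1, (η s : ℂ) * P ((((j : ℝ) + 1) / D * s : ℝ)) = P 0 := by
    have e : ∀ j, ∫ s in (0 : ℝ)..1, (η s : ℂ) * P ((((j : ℝ) + 1) / D * s : ℝ))
        = ∑ k ∈ Finset.range D, (c k * ∫ s in (0 : ℝ)..1, (η s : ℂ) * (s : ℂ) ^ k)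
          * ((((j : ℝ) + 1) / D : ℝ) : ℂ) ^ k := fun j => by
      simp only [hP, Finset.mul_sum]
      rw [intervalIntegral.integral_finsetSum]
      · refine Finset.sum_congr rfl fun k _ => ?_
        rw [← intervalIntegral.integral_const_mul, ← intervalIntegral.integral_mul_const]
        congr 1
        ext s
        rw [Complex.ofReal_mul, mul_pow]
        ring
      · intro k _
        exact Continuous.intervalIntegrable (by fun_prop) _ _
    simp only [e, Finset.mul_sum]
    rw [Finset.sum_comm]
    have e₂ : ∀ k ∈ Finset.range D, ∑ j ∈ Finset.range D, (a j : ℂ) *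
        ((c k * ∫ s in (0 : ℝ)..1, (η s : ℂ) * (s : ℂ) ^ k) * ((((j : ℝ) + 1) / D : ℝ) : ℂ) ^ k)
        = c k * (0 : ℂ) ^ k := fun k hk => by
      have h1 := congrArg (fun x : ℝ => (x : ℂ)) (ha k (Finset.mem_range.1 hk))
      simp only [Complex.ofReal_sum, Complex.ofReal_mul, Complex.ofReal_pow] at h1
      have : ∑ j ∈ Finset.range D, (a j : ℂ) *
        ((c k * ∫ s in (0 : ℝ)..1, (η s : ℂ) * (s : ℂ) ^ k) * ((((j : ℝ) + 1) / D : ℝ) : ℂ) ^ k)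
        = (c k * ∫ s in (0 : ℝ)..1, (η s : ℂ) * (s : ℂ) ^ k) *
          ∑ j ∈ Finset.range D, (a j : ℂ) * ((((j : ℝ) + 1) / D : ℝ) : ℂ) ^ k := by
        rw [Finset.mul_sum]
        exact Finset.sum_congr rfl fun j _ => by ring
      rw [this, h1]
      rcases eq_or_ne k 0 with rfl | hk0
      · have : ∫ s in (0 : ℝ)..1, (η s : ℂ) = 1 := by
          rw [intervalIntegral.integral_ofReal, hη1]
          simp
        simp [this]
      · simp [hk0]
    rw [Finset.sum_congr rfl e₂]
  have hdiff : ∀ j ∈ Finset.range D,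
      ‖(∫ s in (0 : ℝ)..1, (η s : ℂ) * P ((((j : ℝ) + 1) / D * s : ℝ)))
        - ∫ s in (0 : ℝ)..1, (η s : ℂ) * f ((((j : ℝ) + 1) / D * s : ℝ))‖
        ≤ B * (2 / R) ^ D := fun j hj => by
    have hi₂ : IntervalIntegrable (fun s : ℝ => (η s : ℂ) * f ((((j : ℝ) + 1) / D * s : ℝ)))
        volume 0 1 := by
      refine ContinuousOn.intervalIntegrable ?_
      rw [Set.uIcc_of_le zero_le_one]
      refine ContinuousOn.mul (by fun_prop) (hf.continuousOn.comp (by fun_prop) ?_)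
      exact fun s hs => (hc1 _ (hlam j hj s hs)).1
    have hi₁ : IntervalIntegrable (fun s : ℝ => (η s : ℂ) * P ((((j : ℝ) + 1) / D * s : ℝ)))
        volume 0 1 := Continuous.intervalIntegrable (by fun_prop) _ _
    rw [← intervalIntegral.integral_sub hi₁ hi₂]
    have hb : ∀ s ∈ Set.Ioc (0 : ℝ) 1, ‖(η s : ℂ) * P ((((j : ℝ) + 1) / D * s : ℝ))
        - (η s : ℂ) * f ((((j : ℝ) + 1) / D * s : ℝ))‖ ≤ η s * (B * (2 / R) ^ D) := fun s hs => by
      have hs' : s ∈ Set.Icc (0 : ℝ) 1 := ⟨hs.1.le, hs.2⟩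
      rw [← mul_sub, norm_mul, Complex.norm_real, Real.norm_of_nonneg (hη0 s hs'), norm_sub_rev]
      have := hη0 s hs'
      gcongr
      exact (hc1 _ (hlam j hj s hs')).2
    refine (intervalIntegral.norm_integral_le_of_norm_le zero_le_one (ae_of_all _ hb)
      (Continuous.intervalIntegrable (by fun_prop) _ _)).trans ?_
    rw [intervalIntegral.integral_mul_const, hη1, one_mul]
  have h0 := (hc1 0 (by simp)).2
  rw [Complex.ofReal_zero] at h0
  have hfin : f 0 = (f 0 - P 0) + ∑ j ∈ Finset.range D, ((a j : ℂ) *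
      ((∫ s in (0 : ℝ)..1, (η s : ℂ) * P ((((j : ℝ) + 1) / D * s : ℝ)))
        - ∫ s in (0 : ℝ)..1, (η s : ℂ) * f ((((j : ℝ) + 1) / D * s : ℝ)))
      + (a j : ℂ) * ∫ s in (0 : ℝ)..1, (η s : ℂ) * f ((((j : ℝ) + 1) / D * s : ℝ))) := by
    have : ∀ x y z : ℂ, x * (y - z) + x * z = x * y := fun x y z => by ring
    simp only [this]
    rw [hmom]
    ring
  calc ‖f 0‖ ≤ B * (2 / R) ^ D + ∑ j ∈ Finset.range D, (|a j| * (B * (2 / R) ^ D)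
        + |a j| * ‖∫ s in (0 : ℝ)..1, (η s : ℂ) * f ((((j : ℝ) + 1) / D * s : ℝ))‖) := by
        rw [hfin]
        refine (norm_add_le _ _).trans (add_le_add h0 ((norm_sum_le _ _).trans
          (Finset.sum_le_sum fun j hj => (norm_add_le _ _).trans (add_le_add ?_ ?_))))
        · rw [norm_mul, Complex.norm_real, Real.norm_eq_abs]
          gcongr
          exact hdiff j hj
        · rw [norm_mul, Complex.norm_real, Real.norm_eq_abs]
    _ = _ := by
        rw [Finset.sum_add_distrib, ← Finset.sum_mul]
        ring

/-- Quadratic decay of the Fourier transform of a twice differentiable bump on `[0, 1]`. -/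
lemma sq_mul_norm_fourier_le {u u' u'' : ℝ → ℂ} {W : ℝ}
    (hu : ∀ s ∈ Set.Icc (0 : ℝ) 1, HasDerivAt u (u' s) s)
    (hu' : ∀ s ∈ Set.Icc (0 : ℝ) 1, HasDerivAt u' (u'' s) s)
    (hu'' : ContinuousOn u'' (Set.Icc 0 1)) (h0 : u 0 = 0) (h1 : u 1 = 0) (h0' : u' 0 = 0)
    (h1' : u' 1 = 0) (hW : ∀ s ∈ Set.Icc (0 : ℝ) 1, ‖u'' s‖ ≤ W) (y : ℝ) :
    y ^ 2 * ‖∫ s in (0 : ℝ)..1, u s * Complex.exp (Complex.I * y * s)‖ ≤ W := by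
  have hI : Set.uIcc (0 : ℝ) 1 = Set.Icc 0 1 := Set.uIcc_of_le zero_le_one
  have hE : ∀ s : ℝ, HasDerivAt (fun s : ℝ => Complex.exp (Complex.I * y * s))
      (Complex.I * y * Complex.exp (Complex.I * y * s)) s := fun s => by
    have := ((Complex.ofRealCLM.hasDerivAt (x := s)).const_mul (Complex.I * y)).cexp
    simpa [mul_comm] using this
  have hEi : IntervalIntegrable (fun s : ℝ => Complex.I * y * Complex.exp (Complex.I * y * s))
      volume 0 1 := Continuous.intervalIntegrable (by fun_prop) _ _
  have hu'c : ContinuousOn u' (Set.Icc 0 1) := fun s hs =>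
    (hu' s hs).continuousAt.continuousWithinAt
  have e₁ := intervalIntegral.integral_mul_deriv_eq_deriv_mul (a := 0) (b := 1)
    (fun s hs => hu s (hI ▸ hs)) (fun s _ => hE s)
    (ContinuousOn.intervalIntegrable (hI ▸ hu'c)) hEi
  have e₂ := intervalIntegral.integral_mul_deriv_eq_deriv_mul (a := 0) (b := 1)
    (fun s hs => hu' s (hI ▸ hs)) (fun s _ => hE s)
    (ContinuousOn.intervalIntegrable (hI ▸ hu'')) hEi
  rw [h0, h1] at e₁
  rw [h0', h1'] at e₂
  simp only [zero_mul, sub_zero, zero_sub] at e₁ e₂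
  have c : ∀ v : ℝ → ℂ, ∫ s in (0 : ℝ)..1, v s * (Complex.I * y * Complex.exp (Complex.I * y * s))
      = Complex.I * y * ∫ s in (0 : ℝ)..1, v s * Complex.exp (Complex.I * y * s) := fun v => by
    rw [← intervalIntegral.integral_const_mul]
    congr 1
    ext s
    ring
  rw [c] at e₁ e₂
  have e₃ : ((y : ℂ)) ^ 2 * ∫ s in (0 : ℝ)..1, u s * Complex.exp (Complex.I * y * s)
      = -∫ s in (0 : ℝ)..1, u'' s * Complex.exp (Complex.I * y * s) := by
    linear_combination (-Complex.I * y) * e₁ + e₂ - (y : ℂ) ^ 2 *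
      (∫ s in (0 : ℝ)..1, u s * Complex.exp (Complex.I * y * s)) * (-Complex.I_sq)
  have e₄ := congrArg norm e₃
  rw [norm_mul, norm_pow, Complex.norm_real, Real.norm_eq_abs, sq_abs, norm_neg] at e₄
  rw [e₄]
  have := intervalIntegral.norm_integral_le_of_norm_le_const (a := (0 : ℝ)) (b := 1) (C := W)
    (f := fun s => u'' s * Complex.exp (Complex.I * y * s)) (fun s hs => by
      rw [Set.uIoc_of_le zero_le_one] at hs
      rw [norm_mul, Complex.norm_exp]
      simpa using hW s ⟨hs.1.le, hs.2⟩)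
  simpa using this

/-- A polynomial bump of total mass one on `[0, 1]`. -/
def bump (s : ℝ) : ℝ := 30 * s ^ 2 * (1 - s) ^ 2

lemma continuous_bump : Continuous bump := by unfold bump; fun_prop

lemma bump_nonneg (s : ℝ) : 0 ≤ bump s := by unfold bump; positivity

lemma bump_le {s : ℝ} (hs : s ∈ Set.Icc (0 : ℝ) 1) : bump s ≤ 2 := by
  have h : s * (1 - s) ≤ 1 / 4 := by nlinarith [sq_nonneg (s - 1 / 2)]
  have h0 : 0 ≤ s * (1 - s) := mul_nonneg hs.1 (sub_nonneg.2 hs.2)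
  unfold bump
  nlinarith

lemma integral_bump : ∫ s in (0 : ℝ)..1, bump s = 1 := by
  have hd : ∀ s ∈ Set.uIcc (0 : ℝ) 1,
      HasDerivAt (fun s : ℝ => 10 * s ^ 3 - 15 * s ^ 4 + 6 * s ^ 5) (bump s) s := fun s _ => by
    have := (((hasDerivAt_pow 3 s).const_mul 10).sub ((hasDerivAt_pow 4 s).const_mul 15)).add
      ((hasDerivAt_pow 5 s).const_mul 6)
    refine this.congr_deriv ?_
    unfold bump
    push_cast
    ring
  rw [intervalIntegral.integral_eq_sub_of_hasDerivAt hd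
    (continuous_bump.intervalIntegrable _ _)]
  norm_num

/-- The characteristic function of a finitely supported law. -/
def finChar {ι : Type*} (F : Finset ι) (p ξ : ι → ℝ) (s : ℝ) : ℂ :=
  ∑ k ∈ F, (p k : ℂ) * Complex.exp (Complex.I * ξ k * s)

lemma norm_sum_mul_exp_le {ι : Type*} (F : Finset ι) {p : ι → ℝ} (ξ b : ι → ℝ)
    (c : ι → ℂ) (hp : ∀ k ∈ F, 0 ≤ p k) (hc : ∀ k, ‖c k‖ ≤ b k) (s : ℝ) :
    ‖∑ k ∈ F, (p k : ℂ) * (c k * Complex.exp (Complex.I * ξ k * s))‖ ≤ ∑ k ∈ F, p k * b k := by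
  refine norm_sum_le_of_le _ fun k hk => ?_
  rw [norm_mul, norm_mul, Complex.norm_real, Real.norm_of_nonneg (hp k hk), Complex.norm_exp]
  have := hp k hk
  gcongr
  simpa using hc k

lemma half_le_norm_finChar {ι : Type*} (F : Finset ι) {p ξ : ι → ℝ}
    (hp : ∀ k ∈ F, 0 ≤ p k) (hp1 : ∑ k ∈ F, p k = 1) (hξ : ∑ k ∈ F, p k * ξ k ^ 2 ≤ 1)
    {s : ℝ} (hs : s ∈ Set.Icc (0 : ℝ) 1) : 1 / 2 ≤ ‖finChar F p ξ s‖ := by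
  refine le_trans ?_ (Complex.re_le_norm _)
  have e : (finChar F p ξ s).re = ∑ k ∈ F, p k * Real.cos (ξ k * s) := by
    rw [finChar, Complex.re_sum]
    refine Finset.sum_congr rfl fun k _ => ?_
    rw [Complex.re_ofReal_mul, show Complex.I * ξ k * s = ((ξ k * s : ℝ) : ℂ) * Complex.I by
      push_cast; ring, Complex.exp_ofReal_mul_I_re]
  rw [e]
  have : ∑ k ∈ F, (p k - p k * ξ k ^ 2 / 2) ≤ ∑ k ∈ F, p k * Real.cos (ξ k * s) := by
    refine Finset.sum_le_sum fun k hk => ?_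
    have h1 := Real.one_sub_sq_div_two_le_cos (x := ξ k * s)
    have h2 : (ξ k * s) ^ 2 ≤ ξ k ^ 2 := by
      rw [mul_pow]
      exact mul_le_of_le_one_right (sq_nonneg _) (pow_le_one₀ hs.1 hs.2)
    have := mul_le_mul_of_nonneg_left h1 (hp k hk)
    nlinarith [mul_le_mul_of_nonneg_left h2 (hp k hk)]
  rw [Finset.sum_sub_distrib, hp1, ← Finset.sum_div] at this
  linarith

lemma one_add_sq_mul_norm_fourier_bump_div_le {ι : Type*} (F : Finset ι) {p ξ : ι → ℝ}
    (hp : ∀ k ∈ F, 0 ≤ p k) (hp1 : ∑ k ∈ F, p k = 1) (hξ : ∑ k ∈ F, p k * ξ k ^ 2 ≤ 1) (y : ℝ) :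
    (1 + y ^ 2) * ‖∫ s in (0 : ℝ)..1, (bump s / finChar F p ξ s) *
      Complex.exp (Complex.I * y * s)‖ ≤ 700 := by
  set ψ := finChar F p ξ with hψ
  set ψ' : ℝ → ℂ := fun s =>
    ∑ k ∈ F, (p k : ℂ) * ((Complex.I * ξ k) * Complex.exp (Complex.I * ξ k * s)) with hψ'
  set ψ'' : ℝ → ℂ := fun s =>
    ∑ k ∈ F, (p k : ℂ) * ((Complex.I * ξ k) ^ 2 * Complex.exp (Complex.I * ξ k * s)) with hψ''
  have hE : ∀ (k : ι) (s : ℝ), HasDerivAt (fun s : ℝ => Complex.exp (Complex.I * ξ k * s))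
      (Complex.I * ξ k * Complex.exp (Complex.I * ξ k * s)) s := fun k s => by
    have := ((Complex.ofRealCLM.hasDerivAt (x := s)).const_mul (Complex.I * ξ k)).cexp
    simpa [mul_comm] using this
  have hd : ∀ s, HasDerivAt ψ (ψ' s) s := fun s =>
    HasDerivAt.fun_sum fun k _ => (hE k s).const_mul _
  have hd' : ∀ s, HasDerivAt ψ' (ψ'' s) s := fun s => by
    refine HasDerivAt.fun_sum fun k _ => ?_
    have := ((hE k s).const_mul (Complex.I * ξ k)).const_mul (p k : ℂ)
    refine this.congr_deriv ?_
    ring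
  have hψ''c : Continuous ψ'' := by fun_prop
  have hψ'c : Continuous ψ' := by fun_prop
  have hψc : Continuous ψ := continuous_iff_continuousAt.2 fun s => (hd s).continuousAt
  have hψ1 : ∀ s, ‖ψ' s‖ ≤ 1 := fun s => by
    refine (norm_sum_mul_exp_le F ξ (fun k => (1 + ξ k ^ 2) / 2) _ hp (fun k => ?_) s).trans ?_
    · rw [norm_mul, Complex.norm_I, Complex.norm_real, one_mul, Real.norm_eq_abs]
      nlinarith [sq_nonneg (|ξ k| - 1), sq_abs (ξ k)]
    · have : ∑ k ∈ F, p k * ((1 + ξ k ^ 2) / 2)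
          = (∑ k ∈ F, p k + ∑ k ∈ F, p k * ξ k ^ 2) / 2 := by
        rw [← Finset.sum_add_distrib, Finset.sum_div]
        exact Finset.sum_congr rfl fun k _ => by ring
      rw [this, hp1]
      linarith
  have hψ2 : ∀ s, ‖ψ'' s‖ ≤ 1 := fun s => by
    refine (norm_sum_mul_exp_le F ξ (fun k => ξ k ^ 2) _ hp (fun k => ?_) s).trans hξ
    rw [norm_pow, norm_mul, Complex.norm_I, Complex.norm_real, one_mul, Real.norm_eq_abs, sq_abs]
  have hlow : ∀ s ∈ Set.Icc (0 : ℝ) 1, 1 / 2 ≤ ‖ψ s‖ := fun s hs =>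
    half_le_norm_finChar F hp hp1 hξ hs
  have hne : ∀ s ∈ Set.Icc (0 : ℝ) 1, ψ s ≠ 0 := fun s hs =>
    norm_pos_iff.1 (by linarith [hlow s hs])
  have hinv : ∀ s ∈ Set.Icc (0 : ℝ) 1, ‖(ψ s)⁻¹‖ ≤ 2 := fun s hs => by
    rw [norm_inv, inv_le_comm₀ (by linarith [hlow s hs]) (by norm_num)]
    linarith [hlow s hs]
  -- the bump and its derivatives
  set η₁ : ℝ → ℝ := fun s => 60 * s * (1 - s) * (1 - 2 * s) with hη₁
  set η₂ : ℝ → ℝ := fun s => 60 * (1 - 6 * s + 6 * s ^ 2) with hη₂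
  have hb : ∀ s, HasDerivAt (fun s => (bump s : ℂ)) (η₁ s : ℂ) s := fun s => by
    refine HasDerivAt.ofReal_comp ?_
    have h := ((hasDerivAt_pow 2 s).const_mul 30).mul
      (((hasDerivAt_id s).const_sub 1).pow 2)
    refine h.congr_deriv ?_
    simp [hη₁]
    ring
  have hb' : ∀ s, HasDerivAt (fun s => (η₁ s : ℂ)) (η₂ s : ℂ) s := fun s => by
    refine HasDerivAt.ofReal_comp ?_
    have h := (((hasDerivAt_id s).const_mul 60).mul ((hasDerivAt_id s).const_sub 1)).mul
      (((hasDerivAt_id s).const_mul 2).const_sub 1)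
    refine h.congr_deriv ?_
    simp [hη₂]
    ring
  set v' : ℝ → ℂ := fun s => -ψ' s / ψ s ^ 2 with hv'
  set v'' : ℝ → ℂ := fun s => 2 * ψ' s ^ 2 * (ψ s)⁻¹ ^ 3 - ψ'' s * (ψ s)⁻¹ ^ 2 with hv''
  have hv : ∀ s ∈ Set.Icc (0 : ℝ) 1, HasDerivAt (fun s => (ψ s)⁻¹) (v' s) s := fun s hs =>
    (hd s).inv (hne s hs)
  have hvd : ∀ s ∈ Set.Icc (0 : ℝ) 1, HasDerivAt v' (v'' s) s := fun s hs => by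
    have h := (hd' s).neg.div ((hd s).pow 2) (pow_ne_zero 2 (hne s hs))
    refine h.congr_deriv ?_
    have := hne s hs
    simp only [hv'', Pi.neg_apply, Pi.pow_apply]
    field_simp
    ring
  have hfun : ∀ s : ℝ, (bump s : ℂ) / ψ s = bump s * (ψ s)⁻¹ := fun s => div_eq_mul_inv _ _
  simp only [hfun]
  have hψinvc : ContinuousOn (fun s => (ψ s)⁻¹) (Set.Icc 0 1) := hψc.continuousOn.inv₀ hne
  have key := sq_mul_norm_fourier_le (W := 640) (u := fun s => (bump s : ℂ) * (ψ s)⁻¹)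
    (u' := fun s => (η₁ s : ℂ) * (ψ s)⁻¹ + bump s * v' s)
    (u'' := fun s => ((η₂ s : ℂ) * (ψ s)⁻¹ + η₁ s * v' s) + (η₁ s * v' s + bump s * v'' s))
    (fun s hs => (hb s).mul (hv s hs))
    (fun s hs => ((hb' s).mul (hv s hs)).add ((hb s).mul (hvd s hs))) ?_ (by simp [bump])
    (by simp [bump]) (by simp [bump, hη₁]) (by simp [bump, hη₁]) ?_ y
  · have h4 : ‖∫ s in (0 : ℝ)..1, (bump s : ℂ) * (ψ s)⁻¹ * Complex.exp (Complex.I * y * s)‖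
        ≤ 4 := by
      have := intervalIntegral.norm_integral_le_of_norm_le_const (a := (0 : ℝ)) (b := 1) (C := 4)
        (f := fun s => (bump s : ℂ) * (ψ s)⁻¹ * Complex.exp (Complex.I * y * s)) (fun s hs => by
          rw [Set.uIoc_of_le zero_le_one] at hs
          have hs' : s ∈ Set.Icc (0 : ℝ) 1 := ⟨hs.1.le, hs.2⟩
          rw [norm_mul, norm_mul, Complex.norm_exp, Complex.norm_real,
            Real.norm_of_nonneg (bump_nonneg s)]
          have := mul_le_mul (bump_le hs') (hinv s hs') (norm_nonneg _) zero_le_two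
          simpa using this.trans (by norm_num))
      simpa using this
    linarith
  · refine ContinuousOn.add (ContinuousOn.add (ContinuousOn.mul ?_ hψinvc)
      (ContinuousOn.mul ?_ ?_)) (ContinuousOn.add (ContinuousOn.mul ?_ ?_) (ContinuousOn.mul ?_ ?_))
    · exact Continuous.continuousOn (by fun_prop)
    · exact Continuous.continuousOn (by fun_prop)
    · exact fun s hs => (hvd s hs).continuousAt.continuousWithinAt
    · exact Continuous.continuousOn (by fun_prop)
    · exact fun s hs => (hvd s hs).continuousAt.continuousWithinAt
    · exact (Complex.continuous_ofReal.comp continuous_bump).continuousOn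
    · have := hψ'c.continuousOn (s := Set.Icc 0 1)
      have := hψ''c.continuousOn (s := Set.Icc 0 1)
      fun_prop
  · intro s hs
    have hi := hinv s hs
    have hnv' : ‖v' s‖ ≤ 4 := by
      rw [hv', norm_div, norm_neg, norm_pow, div_eq_mul_inv, ← inv_pow, ← norm_inv]
      calc ‖ψ' s‖ * ‖(ψ s)⁻¹‖ ^ 2 ≤ 1 * 2 ^ 2 := by gcongr; exact hψ1 s
        _ = 4 := by norm_num
    have hnv'' : ‖v'' s‖ ≤ 20 := by
      calc ‖v'' s‖ ≤ 2 * ‖ψ' s‖ ^ 2 * ‖(ψ s)⁻¹‖ ^ 3 + ‖ψ'' s‖ * ‖(ψ s)⁻¹‖ ^ 2 := by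
            refine (norm_sub_le _ _).trans_eq ?_
            simp
        _ ≤ 2 * 1 ^ 2 * 2 ^ 3 + 1 * 2 ^ 2 := by
            gcongr
            · exact hψ1 s
            · exact hψ2 s
        _ = 20 := by norm_num
    have h0 := hs.1
    have h1 := hs.2
    have hn1 : ‖(η₁ s : ℂ)‖ ≤ 60 := by
      rw [Complex.norm_real, Real.norm_eq_abs, hη₁]
      have q0 : 0 ≤ s * (1 - s) := mul_nonneg h0 (by linarith)
      have q1 : s * (1 - s) ≤ 1 := by nlinarith
      rw [abs_le]
      constructor <;> nlinarith
    have hn2 : ‖(η₂ s : ℂ)‖ ≤ 60 := by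
      rw [Complex.norm_real, Real.norm_eq_abs, hη₂, abs_le]
      constructor <;> nlinarith [sq_nonneg (s - 1 / 2)]
    have hn0 : ‖(bump s : ℂ)‖ ≤ 2 := by
      rw [Complex.norm_real, Real.norm_of_nonneg (bump_nonneg s)]
      exact bump_le hs
    have m1 : ‖(η₂ s : ℂ) * (ψ s)⁻¹‖ ≤ 60 * 2 := by
      rw [norm_mul]; exact mul_le_mul hn2 hi (norm_nonneg _) (by norm_num)
    have m2 : ‖(η₁ s : ℂ) * v' s‖ ≤ 60 * 4 := by
      rw [norm_mul]; exact mul_le_mul hn1 hnv' (norm_nonneg _) (by norm_num)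
    have m3 : ‖(bump s : ℂ) * v'' s‖ ≤ 2 * 20 := by
      rw [norm_mul]; exact mul_le_mul hn0 hnv'' (norm_nonneg _) (by norm_num)
    have := norm_add_le ((η₂ s : ℂ) * (ψ s)⁻¹ + η₁ s * v' s) (η₁ s * v' s + bump s * v'' s)
    have := norm_add_le ((η₂ s : ℂ) * (ψ s)⁻¹) (η₁ s * v' s)
    have := norm_add_le ((η₁ s : ℂ) * v' s) (bump s * v'' s)
    linarith

lemma one_add_sq_le_three_mul {x y : ℝ} (h : |x - y| ≤ 1) : 1 + x ^ 2 ≤ 3 * (1 + y ^ 2) := by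
  have : (x - y) ^ 2 ≤ 1 := by rw [← sq_abs]; exact pow_le_one₀ (abs_nonneg _) h
  nlinarith [sq_nonneg (x - 2 * y)]

lemma sum_inv_one_add_sq_le (a : ℝ) {σ : ℝ} (hσ : 1 ≤ σ) (F : Finset ℤ) :
    ∑ k ∈ F, (1 + (((k : ℝ) - a) / σ) ^ 2)⁻¹ ≤ 10 * σ := by
  have hσ0 : 0 < σ := by linarith
  set g : ℝ → ℝ := fun y => (1 + ((y - a) / σ) ^ 2)⁻¹ with hg
  have hgi : Integrable g := by
    have := (integrable_inv_one_add_sq.comp_div hσ0.ne').comp_sub_right a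
    simpa [hg] using this
  have hgI : ∫ y, g y = σ * Real.pi := by
    have e₁ : ∫ y, g y = ∫ y : ℝ, (1 + (y / σ) ^ 2)⁻¹ :=
      integral_sub_right_eq_self (fun y : ℝ => (1 + (y / σ) ^ 2)⁻¹) a
    rw [e₁, Measure.integral_comp_div (fun y : ℝ => (1 + y ^ 2)⁻¹) σ,
      integral_univ_inv_one_add_sq, abs_of_pos hσ0, smul_eq_mul]
  have hk : ∀ k : ℤ, (1 + (((k : ℝ) - a) / σ) ^ 2)⁻¹ ≤ ∫ y in Set.Ioc (k : ℝ) (k + 1), 3 * g y := by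
    intro k
    have e : (1 + (((k : ℝ) - a) / σ) ^ 2)⁻¹
        = ∫ _ in Set.Ioc (k : ℝ) (k + 1), (1 + (((k : ℝ) - a) / σ) ^ 2)⁻¹ := by
      simp
    rw [e]
    refine setIntegral_mono_on (by simp) (hgi.const_mul 3).integrableOn measurableSet_Ioc ?_
    intro y hy
    have hd : |(y - a) / σ - (k - a) / σ| ≤ 1 := by
      rw [← sub_div, abs_div, abs_of_pos hσ0, div_le_one hσ0, abs_le]
      constructor <;> linarith [hy.1, hy.2]
    have := one_add_sq_le_three_mul hd
    rw [hg]
    simp only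
    rw [inv_le_iff_one_le_mul₀ (by positivity)]
    rw [mul_assoc, ← div_eq_inv_mul, ← mul_div_assoc, le_div_iff₀ (by positivity)]
    linarith
  calc ∑ k ∈ F, (1 + (((k : ℝ) - a) / σ) ^ 2)⁻¹
      ≤ ∑ k ∈ F, ∫ y in Set.Ioc (k : ℝ) (k + 1), 3 * g y := Finset.sum_le_sum fun k _ => hk k
    _ = ∫ y in ⋃ k ∈ F, Set.Ioc (k : ℝ) (k + 1), 3 * g y := by
        rw [integral_biUnion_finset _ (fun _ _ => measurableSet_Ioc)
          (fun i _ j _ hij => Set.pairwise_disjoint_Ioc_intCast ℝ hij)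
          (fun _ _ => (hgi.const_mul 3).integrableOn)]
    _ ≤ ∫ y, 3 * g y := setIntegral_le_integral (hgi.const_mul 3)
        (ae_of_all _ fun y => by simp only [hg, Pi.zero_apply]; positivity)
    _ = 3 * (σ * Real.pi) := by rw [integral_const_mul, hgI]
    _ ≤ 10 * σ := by nlinarith [Real.pi_lt_d2]

lemma summable_inv_one_add_sq (a : ℝ) {σ : ℝ} (hσ : 1 ≤ σ) :
    Summable fun k : ℤ => (1 + (((k : ℝ) - a) / σ) ^ 2)⁻¹ :=
  summable_of_sum_le (fun k => by positivity) (sum_inv_one_add_sq_le a hσ)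

lemma tsum_inv_one_add_sq_le (a : ℝ) {σ : ℝ} (hσ : 1 ≤ σ) :
    ∑' k : ℤ, (1 + (((k : ℝ) - a) / σ) ^ 2)⁻¹ ≤ 10 * σ :=
  (summable_inv_one_add_sq a hσ).tsum_le_of_sum_le (sum_inv_one_add_sq_le a hσ)

lemma summable_and_norm_tsum_le (a : ℝ) {σ B : ℝ} (hσ : 1 ≤ σ) {v : ℤ → ℂ}
    (hv : ∀ k : ℤ, ‖v k‖ ≤ B * (1 + (((k : ℝ) - a) / σ) ^ 2)⁻¹) :
    Summable v ∧ ‖∑' k, v k‖ ≤ B * (10 * σ) := by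
  have hs := (summable_inv_one_add_sq a hσ).mul_left B
  refine ⟨Summable.of_norm_bounded hs hv, ?_⟩
  have hB : 0 ≤ B := by
    have := (norm_nonneg _).trans (hv 0)
    exact nonneg_of_mul_nonneg_left this (by positivity)
  calc ‖∑' k, v k‖ ≤ ∑' k : ℤ, B * (1 + (((k : ℝ) - a) / σ) ^ 2)⁻¹ :=
        tsum_of_norm_bounded hs.hasSum hv
    _ ≤ _ := by
        rw [tsum_mul_left]
        gcongr
        exact tsum_inv_one_add_sq_le a hσ

/-- Summation by parts for an oscillating sum over the lattice. -/
lemma pow_mul_tsum_exp_eq (t a σ : ℝ) (R : ℕ) {G : ℝ → ℂ}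
    (hG : Summable fun k : ℤ => Complex.exp (Complex.I * t * k) * G (((k : ℝ) - a) / σ)) :
    (Complex.exp (-(Complex.I * t)) - 1) ^ R *
        ∑' k : ℤ, Complex.exp (Complex.I * t * k) * G (((k : ℝ) - a) / σ)
      = ∑' k : ℤ, Complex.exp (Complex.I * t * k) *
          ((fwdDiff (1 / σ))^[R] G) (((k : ℝ) - a) / σ) := by
  induction R generalizing G with
  | zero => simp
  | succ R ih =>
    have hshift : ∀ k : ℤ, Complex.exp (Complex.I * t * k) * G (((k : ℝ) - a) / σ + 1 / σ)
        = Complex.exp (-(Complex.I * t)) * (Complex.exp (Complex.I * t * ((k + 1 : ℤ) : ℂ))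
          * G ((((k + 1 : ℤ) : ℝ) - a) / σ)) := fun k => by
      rw [← mul_assoc, ← Complex.exp_add]
      congr 2
      · push_cast; ring
      · push_cast; ring
    have hs₁ : Summable fun k : ℤ =>
        Complex.exp (Complex.I * t * k) * G (((k : ℝ) - a) / σ + 1 / σ) := by
      simp only [hshift]
      exact (hG.comp_injective (add_left_injective (1 : ℤ))).mul_left _
    have e₁ : ∑' k : ℤ, Complex.exp (Complex.I * t * k) * G (((k : ℝ) - a) / σ + 1 / σ)
        = Complex.exp (-(Complex.I * t)) *
          ∑' k : ℤ, Complex.exp (Complex.I * t * k) * G (((k : ℝ) - a) / σ) := by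
      simp only [hshift]
      rw [tsum_mul_left]
      congr 1
      exact (Equiv.addRight (1 : ℤ)).tsum_eq
        (fun k : ℤ => Complex.exp (Complex.I * t * k) * G (((k : ℝ) - a) / σ))
    have hΔ : ∀ k : ℤ, Complex.exp (Complex.I * t * k) * fwdDiff (1 / σ) G (((k : ℝ) - a) / σ)
        = Complex.exp (Complex.I * t * k) * G (((k : ℝ) - a) / σ + 1 / σ)
          - Complex.exp (Complex.I * t * k) * G (((k : ℝ) - a) / σ) := fun k => by
      rw [fwdDiff, mul_sub]
    have hs₂ : Summable fun k : ℤ =>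
        Complex.exp (Complex.I * t * k) * fwdDiff (1 / σ) G (((k : ℝ) - a) / σ) := by
      simp only [hΔ]
      exact hs₁.sub hG
    rw [Function.iterate_succ_apply, ← ih hs₂]
    simp only [hΔ]
    rw [hs₁.tsum_sub hG, e₁]
    ring

/-- `x ^ i` times a modulated Gaussian. -/
def gaussMode (i : ℕ) (c x : ℝ) : ℂ :=
  (x : ℂ) ^ i * Complex.exp (-(x : ℂ) ^ 2 / 2 + Complex.I * c * x)

lemma norm_gaussMode (i : ℕ) (c x : ℝ) :
    ‖gaussMode i c x‖ = |x| ^ i * Real.exp (-x ^ 2 / 2) := by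
  rw [gaussMode, norm_mul, norm_pow, Complex.norm_real, Real.norm_eq_abs, Complex.norm_exp]
  congr 2
  have : -(x : ℂ) ^ 2 / 2 + Complex.I * c * x = ((-x ^ 2 / 2 : ℝ) : ℂ) + (c * x : ℝ) * Complex.I := by
    push_cast; ring
  rw [this]
  simp [-Complex.ofReal_mul, -Complex.ofReal_pow, -Complex.ofReal_div]

lemma hasDerivAt_gaussMode (i : ℕ) (c x : ℝ) :
    HasDerivAt (gaussMode i c)
      (i * gaussMode (i - 1) c x + Complex.I * c * gaussMode i c x - gaussMode (i + 1) c x) x := by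
  have hx := Complex.ofRealCLM.hasDerivAt (x := x)
  have h := (hx.pow i).mul ((((hx.pow 2).neg.div_const 2).add
    (hx.const_mul (Complex.I * c))).cexp)
  refine h.congr_deriv ?_
  simp only [gaussMode, Pi.pow_apply, Pi.add_apply, Pi.neg_apply, Complex.ofRealCLM_apply,
    Complex.ofReal_one]
  push_cast
  ring

lemma exists_norm_gaussMode_le (i : ℕ) :
    ∃ B, 0 ≤ B ∧ ∀ c x : ℝ, ‖gaussMode i c x‖ ≤ B * (1 + x ^ 2)⁻¹ := by
  have hpow : ∀ n : ℕ, ∀ x : ℝ, (x ^ 2) ^ n * Real.exp (-x ^ 2 / 2) ≤ 2 ^ n * n.factorial := by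
    intro n x
    have h := Real.pow_div_factorial_le_exp (x ^ 2 / 2) (by positivity) n
    rw [div_le_iff₀ (by positivity), div_pow, div_le_iff₀ (by positivity)] at h
    calc (x ^ 2) ^ n * Real.exp (-x ^ 2 / 2)
        ≤ (Real.exp (x ^ 2 / 2) * n.factorial * 2 ^ n) * Real.exp (-x ^ 2 / 2) := by gcongr
      _ = (Real.exp (x ^ 2 / 2) * Real.exp (-x ^ 2 / 2)) * (2 ^ n * n.factorial) := by ring
      _ = _ := by rw [← Real.exp_add]; simp [neg_div]
  refine ⟨2 ^ 0 * (0 : ℕ).factorial + 2 ^ i * i.factorial + 2 ^ 1 * (1 : ℕ).factorial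
    + 2 ^ (i + 1) * (i + 1).factorial, by positivity, fun c x => ?_⟩
  rw [norm_gaussMode, ← div_eq_mul_inv, le_div_iff₀ (by positivity)]
  have hi : |x| ^ i ≤ 1 + (x ^ 2) ^ i := by
    rw [← sq_abs, ← pow_mul, mul_comm 2 i, pow_mul]
    nlinarith [sq_nonneg (|x| ^ i - 1)]
  calc |x| ^ i * Real.exp (-x ^ 2 / 2) * (1 + x ^ 2)
      ≤ (1 + (x ^ 2) ^ i) * Real.exp (-x ^ 2 / 2) * (1 + x ^ 2) := by gcongr
    _ = (x ^ 2) ^ 0 * Real.exp (-x ^ 2 / 2) + (x ^ 2) ^ i * Real.exp (-x ^ 2 / 2)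
        + (x ^ 2) ^ 1 * Real.exp (-x ^ 2 / 2) + (x ^ 2) ^ (i + 1) * Real.exp (-x ^ 2 / 2) := by ring
    _ ≤ _ := add_le_add (add_le_add (add_le_add (hpow 0 x) (hpow i x)) (hpow 1 x)) (hpow (i + 1) x)

lemma hasDerivAt_fwdDiff_iter {h : ℝ} {G G' : ℝ → ℂ} (hG : ∀ x, HasDerivAt G (G' x) x) (R : ℕ)
    (x : ℝ) : HasDerivAt ((fwdDiff h)^[R] G) ((fwdDiff h)^[R] G' x) x := by
  induction R generalizing G G' with
  | zero => exact hG x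
  | succ R ih =>
    exact ih (G := fwdDiff h G) (G' := fwdDiff h G') fun x =>
      ((hG (x + h)).comp_add_const x h).sub (hG x)

/-- Iterated differences of modulated Gaussians, uniformly in the modulation. -/
lemma exists_norm_fwdDiff_gaussMode_le (R i : ℕ) :
    ∃ B, 0 ≤ B ∧ ∀ c ∈ Set.Icc (0 : ℝ) 1, ∀ h ∈ Set.Ioc (0 : ℝ) 1, ∀ x,
      ‖(fwdDiff h)^[R] (gaussMode i c) x‖ ≤ B * h ^ R * (1 + x ^ 2)⁻¹ := by
  induction R generalizing i with
  | zero =>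
    obtain ⟨B, hB0, hB⟩ := exists_norm_gaussMode_le i
    exact ⟨B, hB0, fun c _ h _ x => by simpa using hB c x⟩
  | succ R ih =>
    obtain ⟨B₁, hB₁0, hB₁⟩ := ih (i - 1)
    obtain ⟨B₂, hB₂0, hB₂⟩ := ih i
    obtain ⟨B₃, hB₃0, hB₃⟩ := ih (i + 1)
    refine ⟨(i * B₁ + B₂ + B₃) * 3, by positivity, fun c hc h hh x => ?_⟩
    have hh0 : 0 < h := hh.1
    set G' : ℝ → ℂ := (i : ℂ) • gaussMode (i - 1) c + (Complex.I * c) • gaussMode i c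
      - gaussMode (i + 1) c with hG'
    have hd : ∀ y, HasDerivAt ((fwdDiff h)^[R] (gaussMode i c)) ((fwdDiff h)^[R] G' y) y :=
      hasDerivAt_fwdDiff_iter (fun y => by
        simpa [hG'] using hasDerivAt_gaussMode i c y) R
    have hexp : (fwdDiff h)^[R] G' = (i : ℂ) • (fwdDiff h)^[R] (gaussMode (i - 1) c)
        + (Complex.I * c) • (fwdDiff h)^[R] (gaussMode i c)
        - (fwdDiff h)^[R] (gaussMode (i + 1) c) := by
      rw [hG', sub_eq_add_neg, ← neg_one_smul ℂ (gaussMode (i + 1) c), fwdDiff_iter_add,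
        fwdDiff_iter_add, fwdDiff_iter_const_smul, fwdDiff_iter_const_smul,
        fwdDiff_iter_const_smul, neg_one_smul, ← sub_eq_add_neg]
    have hbd : ∀ y ∈ Set.Icc x (x + h), ‖(fwdDiff h)^[R] G' y‖
        ≤ (i * B₁ + B₂ + B₃) * 3 * h ^ R * (1 + x ^ 2)⁻¹ := by
      intro y hy
      have hxy : (1 + y ^ 2)⁻¹ ≤ 3 * (1 + x ^ 2)⁻¹ := by
        have := one_add_sq_le_three_mul (x := x) (y := y) (by
          rw [abs_le]; constructor <;> linarith [hy.1, hy.2, hh.2])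
        rw [← div_eq_mul_inv, inv_le_iff_one_le_mul₀ (by positivity), div_mul_eq_mul_div,
          le_div_iff₀ (by positivity)]
        linarith
      have n₁ := hB₁ c hc h hh y
      have n₂ := hB₂ c hc h hh y
      have n₃ := hB₃ c hc h hh y
      rw [hexp]
      calc ‖((i : ℂ) • (fwdDiff h)^[R] (gaussMode (i - 1) c)
            + (Complex.I * c) • (fwdDiff h)^[R] (gaussMode i c)
            - (fwdDiff h)^[R] (gaussMode (i + 1) c)) y‖
          ≤ i * ‖(fwdDiff h)^[R] (gaussMode (i - 1) c) y‖
            + c * ‖(fwdDiff h)^[R] (gaussMode i c) y‖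
            + ‖(fwdDiff h)^[R] (gaussMode (i + 1) c) y‖ := by
            refine (norm_sub_le _ _).trans (add_le_add ((norm_add_le _ _).trans_eq ?_) le_rfl)
            simp only [Pi.smul_apply, smul_eq_mul, norm_mul, Complex.norm_natCast, Complex.norm_I,
              Complex.norm_real, Real.norm_of_nonneg hc.1, one_mul]
        _ ≤ i * (B₁ * h ^ R * (1 + y ^ 2)⁻¹) + 1 * (B₂ * h ^ R * (1 + y ^ 2)⁻¹)
            + B₃ * h ^ R * (1 + y ^ 2)⁻¹ := by
            gcongr
            exact hc.2
        _ = (i * B₁ + B₂ + B₃) * h ^ R * (1 + y ^ 2)⁻¹ := by ring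
        _ ≤ (i * B₁ + B₂ + B₃) * h ^ R * (3 * (1 + x ^ 2)⁻¹) := by gcongr
        _ = _ := by ring
    rw [Function.iterate_succ_apply', fwdDiff]
    have := (convex_Icc x (x + h)).norm_image_sub_le_of_norm_hasDerivWithin_le
      (fun y _ => (hd y).hasDerivWithinAt) hbd (Set.left_mem_Icc.2 (by linarith))
      (Set.right_mem_Icc.2 (by linarith))
    rw [add_sub_cancel_left, Real.norm_of_nonneg hh0.le] at this
    refine this.trans_eq ?_
    ring

lemma fwdDiff_iter_integral {u : ℝ → ℂ} (hu : ContinuousOn u (Set.Icc 0 1)) (h : ℝ) (R : ℕ)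
    {g : ℝ → ℝ → ℂ} (hg : ∀ x, Continuous fun s => g s x) :
    (∀ x, Continuous fun s => (fwdDiff h)^[R] (g s) x) ∧
      ∀ x, (fwdDiff h)^[R] (fun x => ∫ s in (0 : ℝ)..1, u s * g s x) x
        = ∫ s in (0 : ℝ)..1, u s * (fwdDiff h)^[R] (g s) x := by
  induction R generalizing g with
  | zero => exact ⟨hg, fun x => rfl⟩
  | succ R ih =>
    obtain ⟨h₁, h₂⟩ := ih (g := fun s => fwdDiff h (g s)) fun x => (hg (x + h)).sub (hg x)
    refine ⟨h₁, fun x => ?_⟩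
    simp only [Function.iterate_succ_apply]
    rw [← h₂]
    refine congrFun (congrArg _ (funext fun y => ?_)) x
    have hi : ∀ y, IntervalIntegrable (fun s => u s * g s y) volume 0 1 := fun y =>
      ContinuousOn.intervalIntegrable (by
        rw [Set.uIcc_of_le zero_le_one]
        exact hu.mul (hg y).continuousOn)
    simp only [fwdDiff, mul_sub]
    rw [intervalIntegral.integral_sub (hi _) (hi _)]

lemma exists_norm_tsum_exp_mul_gaussMode_le {t : ℝ} (ht : Complex.exp (-(Complex.I * t)) ≠ 1)
    (R i : ℕ) :
    ∃ A, 0 ≤ A ∧ ∀ u : ℝ → ℂ, ContinuousOn u (Set.Icc 0 1) → (∀ s ∈ Set.Icc (0 : ℝ) 1, ‖u s‖ ≤ 4) →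
      ∀ l ∈ Set.Icc (0 : ℝ) 1, ∀ a σ : ℝ, 1 ≤ σ →
      Summable (fun k : ℤ => Complex.exp (Complex.I * t * k) *
        ∫ s in (0 : ℝ)..1, u s * gaussMode i (l * s) (((k : ℝ) - a) / σ)) ∧
      ‖∑' k : ℤ, Complex.exp (Complex.I * t * k) *
        ∫ s in (0 : ℝ)..1, u s * gaussMode i (l * s) (((k : ℝ) - a) / σ)‖ ≤ A * (σ⁻¹ ^ R * σ) := by
  obtain ⟨B₀, hB₀0, hB₀⟩ := exists_norm_fwdDiff_gaussMode_le 0 i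
  obtain ⟨B, hB0, hB⟩ := exists_norm_fwdDiff_gaussMode_le R i
  set d : ℝ := ‖Complex.exp (-(Complex.I * t)) - 1‖ with hd
  have hd0 : 0 < d := norm_pos_iff.2 (sub_ne_zero.2 ht)
  refine ⟨(d ^ R)⁻¹ * (4 * B * 10), by positivity, fun u hu hu4 l hl a σ hσ => ?_⟩
  have hσ0 : 0 < σ := by linarith
  have hgc : ∀ x, Continuous fun s : ℝ => gaussMode i (l * s) x := fun x => by
    unfold gaussMode; fun_prop
  have hls : ∀ s ∈ Set.Icc (0 : ℝ) 1, l * s ∈ Set.Icc (0 : ℝ) 1 := fun s hs =>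
    ⟨mul_nonneg hl.1 hs.1, mul_le_one₀ hl.2 hs.1 hs.2⟩
  have hh : 1 / σ ∈ Set.Ioc (0 : ℝ) 1 := ⟨by positivity, by rw [div_le_one hσ0]; exact hσ⟩
  have key : ∀ (R : ℕ) (B : ℝ), 0 ≤ B → (∀ c ∈ Set.Icc (0 : ℝ) 1, ∀ h ∈ Set.Ioc (0 : ℝ) 1, ∀ x,
      ‖(fwdDiff h)^[R] (gaussMode i c) x‖ ≤ B * h ^ R * (1 + x ^ 2)⁻¹) → ∀ k : ℤ,
      ‖Complex.exp (Complex.I * t * k) * ((fwdDiff (1 / σ))^[R]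
        (fun x => ∫ s in (0 : ℝ)..1, u s * gaussMode i (l * s) x)) (((k : ℝ) - a) / σ)‖
      ≤ 4 * (B * (1 / σ) ^ R) * (1 + (((k : ℝ) - a) / σ) ^ 2)⁻¹ := by
    intro R B hB0 hB k
    have e : Complex.I * t * k = ((t * k : ℝ) : ℂ) * Complex.I := by push_cast; ring
    rw [norm_mul, e, Complex.norm_exp_ofReal_mul_I, one_mul, (fwdDiff_iter_integral hu _ R hgc).2]
    have := intervalIntegral.norm_integral_le_of_norm_le_const (a := 0) (b := 1)
      (f := fun s => u s * (fwdDiff (1 / σ))^[R] (gaussMode i (l * s)) (((k : ℝ) - a) / σ))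
      (C := 4 * (B * (1 / σ) ^ R * (1 + (((k : ℝ) - a) / σ) ^ 2)⁻¹)) (fun s hs => by
        rw [Set.uIoc_of_le zero_le_one] at hs
        have hs' : s ∈ Set.Icc (0 : ℝ) 1 := ⟨hs.1.le, hs.2⟩
        rw [norm_mul]
        exact mul_le_mul (hu4 s hs') (hB _ (hls s hs') _ hh _) (norm_nonneg _) (by norm_num))
    refine this.trans_eq ?_
    rw [sub_zero, abs_one]
    ring
  obtain ⟨hsum, -⟩ := summable_and_norm_tsum_le a hσ (key 0 B₀ hB₀0 hB₀)
  simp only [Function.iterate_zero, id_eq] at hsum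
  refine ⟨hsum, ?_⟩
  have hE := pow_mul_tsum_exp_eq t a σ R
    (G := fun x => ∫ s in (0 : ℝ)..1, u s * gaussMode i (l * s) x) hsum
  have hN := congrArg norm hE
  rw [norm_mul, norm_pow, ← hd] at hN
  obtain ⟨-, hb⟩ := summable_and_norm_tsum_le a hσ (key R B hB0 hB)
  rw [← hN] at hb
  rw [← one_div] at *
  rw [mul_assoc, one_div, ← div_eq_inv_mul, le_div_iff₀' (by positivity)]
  refine hb.trans_eq ?_
  ring

/-- An oscillating lattice sum whose amplitude is given up to a small error by a Gaussian
expansion is small. -/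
lemma exists_norm_tsum_le_of_expansion {t : ℝ} (ht : Complex.exp (-(Complex.I * t)) ≠ 1)
    (r Dg : ℕ) {Cb : ℝ} (hCb : 0 ≤ Cb) :
    ∃ A, 0 ≤ A ∧ ∀ (u : ℝ → ℂ) (l W a σ ε : ℝ) (q : ℤ → ℝ) (P : ℕ → Polynomial ℝ),
      ContinuousOn u (Set.Icc 0 1) → (∀ s ∈ Set.Icc (0 : ℝ) 1, ‖u s‖ ≤ 4) →
      l ∈ Set.Icc (0 : ℝ) 1 → 1 ≤ σ → 0 ≤ ε →
      (∀ x : ℝ, ‖∫ s in (0 : ℝ)..1, u s * Complex.exp (Complex.I * (l * x : ℝ) * s)‖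
        ≤ W * (1 + x ^ 2)⁻¹) →
      (∀ b, (P b).natDegree ≤ Dg) → (∀ b i, |(P b).coeff i| ≤ Cb) →
      (∀ k : ℤ, |q k - ∑ b ∈ Finset.Icc 1 r, σ⁻¹ ^ b * (P b).eval (((k : ℝ) - a) / σ) *
        gaussDensity (((k : ℝ) - a) / σ)| ≤ ε * σ⁻¹ ^ r) →
      ‖∑' k : ℤ, (q k : ℂ) * (Complex.exp (Complex.I * t * k) *
        ∫ s in (0 : ℝ)..1, u s * Complex.exp (Complex.I * (l * (((k : ℝ) - a) / σ) : ℝ) * s))‖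
      ≤ ε * σ⁻¹ ^ r * W * (10 * σ) + A * σ⁻¹ ^ r := by
  choose A₀ hA₀ hA using exists_norm_tsum_exp_mul_gaussMode_le ht r
  refine ⟨r * ∑ i ∈ Finset.range (Dg + 1), Cb * A₀ i, by
    have := fun i => mul_nonneg hCb (hA₀ i)
    have := Finset.sum_nonneg fun i (_ : i ∈ Finset.range (Dg + 1)) => this i
    positivity, ?_⟩
  intro u l W a σ ε q P hu hu4 hl hσ hε hW hPD hPC hq
  have hσ0 : 0 < σ := by linarith
  set x : ℤ → ℝ := fun k => ((k : ℝ) - a) / σ with hx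
  set w : ℤ → ℂ := fun k => ∫ s in (0 : ℝ)..1, u s * Complex.exp (Complex.I * (l * x k : ℝ) * s)
    with hw
  set Ed : ℤ → ℝ := fun k => ∑ b ∈ Finset.Icc 1 r, σ⁻¹ ^ b * (P b).eval (x k) *
    gaussDensity (x k) with hEd
  set c : ℝ := (Real.sqrt (2 * Real.pi))⁻¹ with hc
  have hc0 : 0 ≤ c := by positivity
  have hc1 : c ≤ 1 := by
    refine inv_le_one_of_one_le₀ (Real.one_le_sqrt.2 ?_)
    linarith [Real.pi_gt_three]
  set G : ℕ → ℤ → ℂ := fun i k => Complex.exp (Complex.I * t * k) *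
    ∫ s in (0 : ℝ)..1, u s * gaussMode i (l * s) (x k) with hG
  have hGs : ∀ i, Summable (G i) := fun i => (hA i u hu hu4 l hl a σ hσ).1
  have hGb : ∀ i, ‖∑' k, G i k‖ ≤ A₀ i * (σ⁻¹ ^ r * σ) := fun i => (hA i u hu hu4 l hl a σ hσ).2
  -- the remainder
  have hrem := summable_and_norm_tsum_le a hσ (B := ε * σ⁻¹ ^ r * W)
    (v := fun k => ((q k - Ed k : ℝ) : ℂ) * (Complex.exp (Complex.I * t * k) * w k)) (fun k => by
      have e : Complex.I * t * k = ((t * k : ℝ) : ℂ) * Complex.I := by push_cast; ring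
      rw [norm_mul, norm_mul, e, Complex.norm_exp_ofReal_mul_I, one_mul, Complex.norm_real,
        Real.norm_eq_abs, mul_assoc]
      exact mul_le_mul (hq k) (hW (x k)) (norm_nonneg _) (by positivity))
  -- the expansion
  have hmode : ∀ k : ℤ, ((Ed k : ℝ) : ℂ) * (Complex.exp (Complex.I * t * k) * w k)
      = ∑ b ∈ Finset.Icc 1 r, ∑ i ∈ Finset.range (Dg + 1),
        ((σ⁻¹ ^ b * (P b).coeff i * c : ℝ) : ℂ) * G i k := by
    intro k
    have hGw : ∀ i, G i k = ((x k ^ i * Real.exp (-x k ^ 2 / 2) : ℝ) : ℂ) *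
        (Complex.exp (Complex.I * t * k) * w k) := by
      intro i
      simp only [hG, hw]
      conv_rhs => rw [mul_left_comm, ← intervalIntegral.integral_const_mul]
      congr 1
      refine intervalIntegral.integral_congr fun s _ => ?_
      rw [gaussMode, Complex.exp_add]
      push_cast
      ring_nf
    simp only [hGw, ← mul_assoc, ← Finset.sum_mul]
    congr 2
    rw [hEd]
    push_cast
    refine Finset.sum_congr rfl fun b _ => ?_
    rw [Polynomial.eval_eq_sum_range' (Nat.lt_succ_of_le (hPD b)), gaussDensity]
    push_cast
    rw [Finset.mul_sum, Finset.sum_mul]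
    refine Finset.sum_congr rfl fun i _ => ?_
    rw [hc]
    push_cast
    ring
  have hms : Summable fun k : ℤ => ((Ed k : ℝ) : ℂ) * (Complex.exp (Complex.I * t * k) * w k) := by
    simp only [hmode]
    exact summable_sum fun b _ => summable_sum fun i _ => (hGs i).mul_left _
  have hmb : ‖∑' k : ℤ, ((Ed k : ℝ) : ℂ) * (Complex.exp (Complex.I * t * k) * w k)‖
      ≤ (r * ∑ i ∈ Finset.range (Dg + 1), Cb * A₀ i) * σ⁻¹ ^ r := by
    simp only [hmode]
    rw [Summable.tsum_finsetSum fun b _ => summable_sum fun i _ => (hGs i).mul_left _]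
    have hb : ∀ b ∈ Finset.Icc 1 r, ‖∑' k : ℤ, ∑ i ∈ Finset.range (Dg + 1),
        ((σ⁻¹ ^ b * (P b).coeff i * c : ℝ) : ℂ) * G i k‖
        ≤ (∑ i ∈ Finset.range (Dg + 1), Cb * A₀ i) * σ⁻¹ ^ r := by
      intro b hb
      rw [Summable.tsum_finsetSum fun i _ => (hGs i).mul_left _, Finset.sum_mul]
      refine norm_sum_le_of_le _ fun i _ => ?_
      rw [tsum_mul_left, norm_mul, Complex.norm_real, Real.norm_eq_abs, abs_mul, abs_mul,
        abs_of_nonneg hc0, abs_of_nonneg (by positivity : (0 : ℝ) ≤ σ⁻¹ ^ b)]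
      have hb1 : σ⁻¹ ^ b ≤ σ⁻¹ := by
        simpa using pow_le_pow_of_le_one (by positivity) (inv_le_one_of_one_le₀ hσ)
          (Finset.mem_Icc.1 hb).1
      have := hA₀ i
      calc σ⁻¹ ^ b * |(P b).coeff i| * c * ‖∑' k, G i k‖
          ≤ σ⁻¹ * Cb * 1 * (A₀ i * (σ⁻¹ ^ r * σ)) := by
            gcongr
            · exact hPC b i
            · exact hGb i
        _ = Cb * A₀ i * σ⁻¹ ^ r * (σ⁻¹ * σ) := by ring
        _ = _ := by rw [inv_mul_cancel₀ hσ0.ne', mul_one]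
    refine (norm_sum_le_of_le _ hb).trans_eq ?_
    rw [Finset.sum_const, Nat.card_Icc, nsmul_eq_mul]
    push_cast [Nat.add_sub_cancel]
    ring
  have hsplit : ∀ k : ℤ, (q k : ℂ) * (Complex.exp (Complex.I * t * k) * w k)
      = ((q k - Ed k : ℝ) : ℂ) * (Complex.exp (Complex.I * t * k) * w k)
        + ((Ed k : ℝ) : ℂ) * (Complex.exp (Complex.I * t * k) * w k) := fun k => by
    push_cast; ring
  change ‖∑' k : ℤ, (q k : ℂ) * (Complex.exp (Complex.I * t * k) * w k)‖ ≤ _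
  rw [tsum_congr hsplit, hrem.1.tsum_add hms]
  exact (norm_add_le _ _).trans (add_le_add hrem.2 hmb)

/-- The characteristic function of a finitely supported law on `ℤ`, at a complex argument. -/
def latticeChar (F : Finset ℤ) (p : ℤ → ℝ) (z : ℂ) : ℂ :=
  ∑ k ∈ F, (p k : ℂ) * Complex.exp (Complex.I * z * k)

lemma differentiable_latticeChar (F : Finset ℤ) (p : ℤ → ℝ) : Differentiable ℂ (latticeChar F p) := by
  unfold latticeChar
  fun_prop

lemma latticeChar_zero (F : Finset ℤ) (p : ℤ → ℝ) (hp1 : ∑ k ∈ F, p k = 1) :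
    latticeChar F p 0 = 1 := by
  simp [latticeChar, ← Complex.ofReal_sum, hp1]

lemma latticeChar_add_div (F : Finset ℤ) (p : ℤ → ℝ) (t a l s σ : ℝ) :
    latticeChar F p (t + ((l * s : ℝ) : ℂ) / σ)
      = Complex.exp (Complex.I * (l * s * a / σ : ℝ)) * ∑ k ∈ F, (p k : ℂ) *
        (Complex.exp (Complex.I * t * k) *
          Complex.exp (Complex.I * (l * (((k : ℝ) - a) / σ) : ℝ) * s)) := by
  rw [latticeChar, Finset.mul_sum]
  refine Finset.sum_congr rfl fun k _ => ?_
  rw [mul_left_comm, ← Complex.exp_add, ← Complex.exp_add]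
  congr 2
  push_cast
  ring

lemma latticeChar_div (F : Finset ℤ) (p : ℤ → ℝ) (a l s σ : ℝ) :
    latticeChar F p (((l * s : ℝ) : ℂ) / σ)
      = Complex.exp (Complex.I * (l * s * a / σ : ℝ)) *
        finChar F p (fun k => l * (((k : ℝ) - a) / σ)) s := by
  have := latticeChar_add_div F p 0 a l s σ
  simpa [finChar] using this

lemma continuous_finChar {ι : Type*} (F : Finset ι) (p ξ : ι → ℝ) : Continuous (finChar F p ξ) := by
  unfold finChar
  fun_prop

/-- A lattice law with an expansion of order `r` has a small characteristic function at `t`,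
provided that the ratio of its characteristic functions near `t` and near `0` grows at most
polynomially. -/
lemma exists_norm_latticeChar_le {t : ℝ} (ht : Complex.exp (-(Complex.I * t)) ≠ 1)
    (r Dg D : ℕ) {Cb δ : ℝ} (hCb : 0 ≤ Cb) (hδ : 0 < δ) :
    ∃ A₁ A₂, 0 ≤ A₁ ∧ 0 ≤ A₂ ∧ ∀ (F : Finset ℤ) (p : ℤ → ℝ) (a σ ε B : ℝ) (P : ℕ → Polynomial ℝ),
      (∀ k, 0 ≤ p k) → (∀ k ∉ F, p k = 0) → ∑ k ∈ F, p k = 1 →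
      ∑ k ∈ F, p k * ((k : ℝ) - a) ^ 2 = σ ^ 2 → 1 ≤ σ → 1 < δ * σ → 0 ≤ ε →
      (∀ z : ℂ, ‖z‖ < δ → latticeChar F p z ≠ 0 ∧
        ‖latticeChar F p (t + z)‖ ≤ B * ‖latticeChar F p z‖) →
      (∀ b, (P b).natDegree ≤ Dg) → (∀ b i, |(P b).coeff i| ≤ Cb) →
      (∀ k : ℤ, |p k - ∑ b ∈ Finset.Icc 1 r, σ⁻¹ ^ b * (P b).eval (((k : ℝ) - a) / σ) *
        gaussDensity (((k : ℝ) - a) / σ)| ≤ ε * σ⁻¹ ^ r) →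
      ‖latticeChar F p t‖ ≤ A₁ * (ε * σ⁻¹ ^ r * σ + σ⁻¹ ^ r) + A₂ * B * σ⁻¹ ^ D := by
  obtain ⟨A, hA0, hA⟩ := exists_norm_tsum_le_of_expansion ht r Dg hCb
  obtain ⟨α, hα⟩ := exists_extrapolation_weights D
  set Λ : ℝ := ∑ j ∈ Finset.range D, |α j| with hΛ
  have hΛ0 : 0 ≤ Λ := Finset.sum_nonneg fun _ _ => abs_nonneg _
  refine ⟨Λ * (7000 * D ^ 2 + A), (1 + Λ) * (2 / δ) ^ D, by positivity, by positivity, ?_⟩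
  intro F p a σ ε B P hp hpF hp1 hvar hσ hδσ hε hB hPD hPC hq
  have hσ0 : 0 < σ := by linarith
  set f : ℂ → ℂ := fun z => latticeChar F p (t + z / σ) / latticeChar F p (z / σ) with hf
  have hball : ∀ z ∈ Metric.ball (0 : ℂ) (δ * σ), ‖z / σ‖ < δ := by
    intro z hz
    rw [mem_ball_zero_iff] at hz
    rwa [norm_div, Complex.norm_real, Real.norm_of_nonneg hσ0.le, div_lt_iff₀ hσ0]
  have hd := differentiable_latticeChar F p
  have hfd : DifferentiableOn ℂ f (Metric.ball 0 (δ * σ)) := by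
    refine DifferentiableOn.div ?_ ?_ fun z hz => (hB _ (hball z hz)).1
    · exact (hd.comp (by fun_prop : Differentiable ℂ fun z : ℂ => (t : ℂ) + z / σ)).differentiableOn
    · exact (hd.comp (by fun_prop : Differentiable ℂ fun z : ℂ => z / σ)).differentiableOn
  have hfB : ∀ z ∈ Metric.ball (0 : ℂ) (δ * σ), ‖f z‖ ≤ B := by
    intro z hz
    obtain ⟨h0, h1⟩ := hB _ (hball z hz)
    rw [hf]
    simp only
    rwa [norm_div, div_le_iff₀ (norm_pos_iff.2 h0)]
  have hmain := norm_apply_zero_le_averages D hα continuous_bump (fun s _ => bump_nonneg s)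
    integral_bump hδσ hfd hfB
  have hf0 : f 0 = latticeChar F p t := by
    simp [hf, latticeChar_zero F p hp1]
  rw [hf0] at hmain
  have hvar1 : ∑ k ∈ F, p k * (((k : ℝ) - a) / σ) ^ 2 = 1 := by
    simp only [div_pow, ← mul_div_assoc]
    rw [← Finset.sum_div, hvar, div_self (by positivity)]
  have hj : ∀ j ∈ Finset.range D, ‖∫ s in (0 : ℝ)..1, (bump s : ℂ) *
      f ((((j : ℝ) + 1) / D * s : ℝ))‖ ≤ ε * σ⁻¹ ^ r * (700 * D ^ 2) * (10 * σ) + A * σ⁻¹ ^ r := by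
    intro j hjD
    have hD0 : (0 : ℝ) < D := by
      have := (Finset.mem_range.1 hjD)
      exact_mod_cast (Nat.zero_le j).trans_lt this
    set l : ℝ := ((j : ℝ) + 1) / D with hl
    have hl1 : l ≤ 1 := by
      rw [hl, div_le_one hD0]
      exact_mod_cast Finset.mem_range.1 hjD
    have hl0 : (D : ℝ)⁻¹ ≤ l := by
      rw [hl, ← one_div]
      gcongr
      linarith [(Nat.cast_nonneg j : (0 : ℝ) ≤ j)]
    have hlp : 0 < l := lt_of_lt_of_le (by positivity) hl0
    set ξ : ℤ → ℝ := fun k => l * (((k : ℝ) - a) / σ) with hξ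
    have hξ1 : ∑ k ∈ F, p k * ξ k ^ 2 ≤ 1 := by
      rw [← hvar1]
      refine Finset.sum_le_sum fun k _ => mul_le_mul_of_nonneg_left ?_ (hp k)
      rw [hξ]
      simp only
      rw [mul_pow]
      exact mul_le_of_le_one_left (sq_nonneg _) (pow_le_one₀ hlp.le hl1)
    have hhalf : ∀ s ∈ Set.Icc (0 : ℝ) 1, 1 / 2 ≤ ‖finChar F p ξ s‖ := fun s hs =>
      half_le_norm_finChar F (fun k _ => hp k) hp1 hξ1 hs
    have hne : ∀ s ∈ Set.Icc (0 : ℝ) 1, finChar F p ξ s ≠ 0 := fun s hs h0 => by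
      have := hhalf s hs
      rw [h0, norm_zero] at this
      norm_num at this
    set u : ℝ → ℂ := fun s => (bump s : ℂ) / finChar F p ξ s with hu
    have huc : ContinuousOn u (Set.Icc 0 1) :=
      ContinuousOn.div (Complex.continuous_ofReal.comp continuous_bump).continuousOn
        (continuous_finChar F p ξ).continuousOn hne
    have hu4 : ∀ s ∈ Set.Icc (0 : ℝ) 1, ‖u s‖ ≤ 4 := by
      intro s hs
      rw [hu]
      simp only
      rw [norm_div, Complex.norm_real, Real.norm_of_nonneg (bump_nonneg s),
        div_le_iff₀ (norm_pos_iff.2 (hne s hs))]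
      linarith [bump_le hs, hhalf s hs]
    have hW : ∀ x : ℝ, ‖∫ s in (0 : ℝ)..1, u s * Complex.exp (Complex.I * (l * x : ℝ) * s)‖
        ≤ 700 * D ^ 2 * (1 + x ^ 2)⁻¹ := by
      intro x
      have h := one_add_sq_mul_norm_fourier_bump_div_le F (fun k _ => hp k) hp1 hξ1 (l * x)
      rw [← div_eq_mul_inv, le_div_iff₀ (by positivity)]
      have hDl : 1 ≤ D * l := by
        have := mul_le_mul_of_nonneg_left hl0 hD0.le
        rwa [mul_inv_cancel₀ hD0.ne'] at this
      have hD1 : 1 ≤ (D : ℝ) := hDl.trans (mul_le_of_le_one_right hD0.le hl1)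
      have hx : 1 + x ^ 2 ≤ D ^ 2 * (1 + (l * x) ^ 2) := by
        have e₁ : 1 ≤ (D : ℝ) ^ 2 := one_le_pow₀ hD1
        have e₂ : 1 ≤ (D * l) ^ 2 := one_le_pow₀ hDl
        nlinarith [sq_nonneg x]
      calc _ ≤ ‖∫ s in (0 : ℝ)..1, u s * Complex.exp (Complex.I * (l * x : ℝ) * s)‖
            * (D ^ 2 * (1 + (l * x) ^ 2)) := by gcongr
        _ = D ^ 2 * ((1 + (l * x) ^ 2) *
            ‖∫ s in (0 : ℝ)..1, u s * Complex.exp (Complex.I * (l * x : ℝ) * s)‖) := by ring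
        _ ≤ D ^ 2 * 700 := by gcongr
        _ = _ := by ring
    have hbd := hA u l (700 * D ^ 2) a σ ε p P huc hu4 ⟨hlp.le, hl1⟩ hσ hε hW hPD hPC hq
    refine le_of_eq_of_le (congrArg norm ?_) hbd
    rw [tsum_eq_sum (s := F) (fun k hk => by rw [hpF k hk]; simp)]
    have hint : ∀ k ∈ F, IntervalIntegrable (fun s : ℝ => (p k : ℂ) * (Complex.exp (Complex.I * t * k)
        * (u s * Complex.exp (Complex.I * (l * (((k : ℝ) - a) / σ) : ℝ) * s)))) volume 0 1 := by
      intro k _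
      refine ContinuousOn.intervalIntegrable ?_
      rw [Set.uIcc_of_le zero_le_one]
      refine continuousOn_const.mul (continuousOn_const.mul (huc.mul ?_))
      fun_prop
    simp only [← intervalIntegral.integral_const_mul]
    rw [← intervalIntegral.integral_finsetSum hint]
    refine intervalIntegral.integral_congr fun s _ => ?_
    simp only [hf, hu]
    rw [latticeChar_add_div F p t a l s σ, latticeChar_div F p a l s σ,
      mul_div_mul_left _ _ (Complex.exp_ne_zero _), ← mul_div_assoc, Finset.mul_sum,
      Finset.sum_div]
    refine Finset.sum_congr rfl fun k _ => ?_
    ring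
  refine hmain.trans (add_le_add ?_ (le_of_eq ?_))
  · calc _ ≤ ∑ j ∈ Finset.range D,
          |α j| * (ε * σ⁻¹ ^ r * (700 * D ^ 2) * (10 * σ) + A * σ⁻¹ ^ r) :=
          Finset.sum_le_sum fun j hj' => mul_le_mul_of_nonneg_left (hj j hj') (abs_nonneg _)
      _ = Λ * (7000 * D ^ 2 * (ε * σ⁻¹ ^ r * σ) + A * σ⁻¹ ^ r) := by
          rw [← Finset.sum_mul]; ring
      _ ≤ Λ * ((7000 * D ^ 2 + A) * (ε * σ⁻¹ ^ r * σ) + (7000 * D ^ 2 + A) * σ⁻¹ ^ r) := by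
          gcongr <;> linarith [(by positivity : (0 : ℝ) ≤ 7000 * D ^ 2)]
      _ = _ := by ring
  · rw [div_mul_eq_div_div, div_eq_mul_inv (2 / δ) σ, mul_pow]
    ring

lemma integral_comp_eq_sum {α G : Type*} [MeasurableSpace α] [NormedAddCommGroup G]
    [NormedSpace ℝ G] [CompleteSpace G] (ν : Measure α) [IsFiniteMeasure ν] {Y : α → ℤ}
    (hY : Measurable Y) {F : Finset ℤ} (hF : ∀ ω, Y ω ∈ F) (g : ℤ → G) :
    ∫ ω, g (Y ω) ∂ν = ∑ k ∈ F, (ν {ω | Y ω = k}).toReal • g k := by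
  have hm : ∀ k, MeasurableSet {ω | Y ω = k} := fun k => hY (measurableSet_singleton k)
  have e : ∀ ω, g (Y ω) = ∑ k ∈ F, Set.indicator {ω | Y ω = k} (fun _ => g k) ω := by
    intro ω
    have : ∀ k, Set.indicator {ω | Y ω = k} (fun _ => g k) ω = if Y ω = k then g k else 0 :=
      fun k => by simp [Set.indicator_apply]
    simp only [this]
    rw [Finset.sum_ite_eq, if_pos (hF ω)]
  simp only [e]
  rw [integral_finsetSum _ fun k _ => (integrable_const _).indicator (hm k)]
  exact Finset.sum_congr rfl fun k _ => integral_indicator_const _ (hm k)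

lemma norm_exp_I_mul_int (t : ℝ) (k : ℤ) : ‖Complex.exp (Complex.I * t * k)‖ = 1 := by
  rw [show Complex.I * t * k = ((t * k : ℝ) : ℂ) * Complex.I by push_cast; ring,
    Complex.norm_exp_ofReal_mul_I]

lemma exp_I_mul_emod {t : ℝ} {l m : ℕ} (hm : 0 < m) (ht : t = 2 * Real.pi * l / m) (k : ℤ) :
    Complex.exp (Complex.I * t * (k % m : ℤ)) = Complex.exp (Complex.I * t * k) := by
  have hm' : (m : ℂ) ≠ 0 := by exact_mod_cast hm.ne'
  have e : Complex.I * t * k = Complex.I * t * (k % m : ℤ)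
      + ((l * (k / m) : ℤ) : ℂ) * (2 * Real.pi * Complex.I) := by
    conv_lhs => rw [← Int.emod_add_mul_ediv k m]
    rw [ht]
    push_cast
    field_simp
  rw [e, Complex.exp_add, Complex.exp_int_mul_two_pi_mul_I, mul_one]

lemma exp_neg_I_mul_ne_one {t : ℝ} {l m : ℕ} (hlm : l < m) (ht : t = 2 * Real.pi * l / m)
    (ht0 : t ≠ 0) : Complex.exp (-(Complex.I * t)) ≠ 1 := by
  have hm : (0 : ℝ) < m := by exact_mod_cast (Nat.zero_le l).trans_lt hlm
  rw [Complex.exp_neg, Ne, inv_eq_one, Complex.exp_eq_one_iff]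
  rintro ⟨n, hn⟩
  have h1 : t = n * (2 * Real.pi) := by
    have : Complex.I * (t : ℂ) = Complex.I * ((n * (2 * Real.pi) : ℝ) : ℂ) := by
      rw [hn]; push_cast; ring
    exact_mod_cast mul_left_cancel₀ Complex.I_ne_zero this
  have h2 : (l : ℝ) = n * m := by
    have hpi := Real.pi_pos
    rw [ht] at h1
    field_simp at h1
    linarith
  have h3 : (l : ℤ) = n * m := by exact_mod_cast h2
  have hl0 : l ≠ 0 := fun h0 => ht0 (by rw [ht, h0]; simp)
  have : (m : ℤ) ∣ l := ⟨n, by rw [h3, mul_comm]⟩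
  exact absurd (Nat.le_of_dvd (Nat.pos_of_ne_zero hl0) (Int.natCast_dvd_natCast.1 this))
    (not_le.2 hlm)

lemma exists_gap_exp_I_mul {t : ℝ} {l m : ℕ} (hlm : l < m) (ht : t = 2 * Real.pi * l / m) :
    ∃ s : ℝ, 0 < s ∧ s ≤ 2 ∧ ∀ k j : ℤ,
      Complex.exp (Complex.I * t * k) ≠ Complex.exp (Complex.I * t * j) →
      s ≤ ‖Complex.exp (Complex.I * t * k) - Complex.exp (Complex.I * t * j)‖ := by
  classical
  have hm : 0 < m := (Nat.zero_le l).trans_lt hlm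
  set e : ℤ → ℂ := fun k => Complex.exp (Complex.I * t * k) with he
  set I : Finset (ℤ × ℤ) := (Finset.Ico (0 : ℤ) m ×ˢ Finset.Ico (0 : ℤ) m).filter
    fun q => e q.1 ≠ e q.2 with hI
  have hmod : ∀ k : ℤ, k % m ∈ Finset.Ico (0 : ℤ) m := fun k => by
    have : (0 : ℤ) < m := by exact_mod_cast hm
    exact Finset.mem_Ico.2 ⟨Int.emod_nonneg _ this.ne', Int.emod_lt_of_pos _ this⟩
  have hem : ∀ k : ℤ, e (k % m) = e k := fun k => exp_I_mul_emod hm ht k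
  have hmem : ∀ k j : ℤ, e k ≠ e j → (k % m, j % m) ∈ I := fun k j hkj => by
    rw [hI, Finset.mem_filter, Finset.mem_product]
    exact ⟨⟨hmod k, hmod j⟩, by simpa only [hem] using hkj⟩
  rcases I.eq_empty_or_nonempty with h | h
  · refine ⟨1, one_pos, one_le_two, fun k j hkj => ?_⟩
    have := hmem k j hkj
    rw [h] at this
    simp at this
  · obtain ⟨q, hq, hmin⟩ := Finset.exists_min_image I (fun q => ‖e q.1 - e q.2‖) h
    refine ⟨‖e q.1 - e q.2‖, norm_pos_iff.2 (sub_ne_zero.2 (Finset.mem_filter.1 hq).2), ?_, ?_⟩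
    · refine (norm_sub_le _ _).trans ?_
      simp only [he, norm_exp_I_mul_int]
      norm_num
    · intro k j hkj
      have := hmin _ (hmem k j hkj)
      simpa only [hem] using this

/-- Some residue class carries mass at least `1 / m`. -/
lemma exists_residue_mass {α : Type*} [MeasurableSpace α] (ν : Measure α) [IsProbabilityMeasure ν]
    {Y : α → ℤ} (hY : Measurable Y) {t : ℝ} {l m : ℕ} (hm : 0 < m)
    (ht : t = 2 * Real.pi * l / m) :
    ∃ j : ℤ, 1 / (m : ℝ) ≤
      ν.real {y | Complex.exp (Complex.I * t * Y y) = Complex.exp (Complex.I * t * j)} := by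
  have hm' : (0 : ℤ) < m := by exact_mod_cast hm
  have hsum := integral_comp_eq_sum ν (Y := fun y => Y y % m)
    ((measurable_from_top (f := fun k : ℤ => k % m)).comp hY) (F := Finset.Ico (0 : ℤ) m)
    (fun y => Finset.mem_Ico.2 ⟨Int.emod_nonneg _ hm'.ne', Int.emod_lt_of_pos _ hm'⟩)
    (fun _ => (1 : ℝ))
  simp only [integral_const, smul_eq_mul, mul_one, probReal_univ] at hsum
  have hle : ∑ k ∈ Finset.Ico (0 : ℤ) m, 1 / (m : ℝ)
      ≤ ∑ k ∈ Finset.Ico (0 : ℤ) m, (ν {y | Y y % m = k}).toReal := by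
    rw [← hsum, Finset.sum_const, Int.card_Ico, nsmul_eq_mul]
    simp only [sub_zero, Int.toNat_natCast]
    rw [mul_one_div_cancel (by exact_mod_cast hm.ne')]
  obtain ⟨j, -, hj⟩ := Finset.exists_le_of_sum_le (Finset.nonempty_Ico.2 hm') hle
  refine ⟨j, hj.trans (measureReal_mono fun y hy => ?_)⟩
  simp only [Set.mem_ofPred_eq] at hy ⊢
  rw [← exp_I_mul_emod hm ht (Y y), hy]

lemma measurable_S {X : ℕ → Ω → E} {f : ℕ → E → ℤ} (hX : ∀ n, Measurable (X n))
    (hf : ∀ n, Measurable (f n)) (N : ℕ) : Measurable (S X f N) := by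
  unfold S
  exact Finset.measurable_sum _ fun n _ => (hf n).comp (hX n)

lemma prod_exp_eq (X : ℕ → Ω → E) (f : ℕ → E → ℤ) (z : ℂ) (N : ℕ) (ω : Ω) :
    ∏ j ∈ Finset.Icc 1 N, Complex.exp (Complex.I * z * f j (X j ω))
      = Complex.exp (Complex.I * z * S X f N ω) := by
  rw [← Complex.exp_sum, ← Finset.mul_sum, S]
  push_cast
  rfl

/-- For each `N` there is a number `M` measuring how much the chain oscillates at a resonant
point: the characteristic function decays in `M`, while its ratio to the characteristic function
near the origin grows at most exponentially in `M`. -/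
lemma UEChain.exists_charFn_bounds {μ : Measure Ω} {X : ℕ → Ω → E} {κ : ℕ → Kernel E E}
    {f : ℕ → E → ℤ} {C : ℝ} {K : ℕ} (hC : 1 < C) (hK : 1 ≤ K) (h : UEChain μ X κ C)
    (hf : ∀ n, Measurable (f n)) (hb : ∀ n x, |f n x| ≤ (K : ℤ)) {t : ℝ} {l m : ℕ} (hlm : l < m)
    (ht : t = 2 * Real.pi * l / m) :
    ∃ δ c L : ℝ, 0 < δ ∧ 0 < c ∧ 0 ≤ L ∧ ∀ N, ∃ M : ℝ,
      (∀ z : ℂ, ‖z‖ < δ →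
        (∫ ω, Complex.exp (Complex.I * z * (S X f N ω : ℂ)) ∂μ) ≠ 0 ∧
        ‖∫ ω, Complex.exp (Complex.I * (t + z) * (S X f N ω : ℂ)) ∂μ‖
          ≤ 2 * Real.exp (L * M) * ‖∫ ω, Complex.exp (Complex.I * z * (S X f N ω : ℂ)) ∂μ‖) ∧
      ‖∫ ω, Complex.exp (Complex.I * t * (S X f N ω : ℂ)) ∂μ‖ ≤ Real.exp (c * (1 - M)) := by
  have hm : 0 < m := (Nat.zero_le l).trans_lt hlm
  have hC0 : 0 < C := by linarith
  have hK0 : (1 : ℝ) ≤ K := by exact_mod_cast hK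
  have := h.1
  have : ∀ n, IsMarkovKernel (κ n) := h.2.2.1
  have : ∀ n, IsProbabilityMeasure (μ.map (X n)) := fun n =>
    Measure.isProbabilityMeasure_map (h.2.1 n).aemeasurable
  obtain ⟨s, hs0, hs2, hs⟩ := exists_gap_exp_I_mul hlm ht
  choose j hj using fun n => exists_residue_mass (μ.map (X n)) (hf n) hm ht
  have hem : ∀ z : ℂ, ∀ n, Measurable fun y => Complex.exp (Complex.I * z * f n y) := fun z n =>
    (measurable_from_top (f := fun k : ℤ => Complex.exp (Complex.I * z * k))).comp (hf n)
  have hfK : ∀ n y, ‖(f n y : ℂ)‖ ≤ K := fun n y => by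
    rw [Complex.norm_intCast]; exact_mod_cast hb n y
  have heb : ∀ z : ℂ, ∀ n, ∃ R, ∀ y, ‖Complex.exp (Complex.I * z * f n y)‖ ≤ R := fun z n =>
    ⟨Real.exp (‖z‖ * K), fun y => by
      refine (Complex.norm_exp_le_exp_norm _).trans (Real.exp_le_exp.2 ?_)
      rw [norm_mul, norm_mul, Complex.norm_I, one_mul]
      exact mul_le_mul_of_nonneg_left (hfK n y) (norm_nonneg _)⟩
  have hΦ : ∀ z : ℂ, ∀ N, ∫ ω, Complex.exp (Complex.I * z * (S X f N ω : ℂ)) ∂μ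
      = ∫ x, backward κ (fun n y => Complex.exp (Complex.I * z * f n y)) N 0 x ∂(μ.map (X 0)) := by
    intro z N
    rw [← h.integral_prod (hem z) (heb z) N]
    simp only [prod_exp_eq]
  set g₀ : ℕ → ℂ := fun n => Complex.exp (Complex.I * t * j n) with hg₀
  have hg₀1 : ∀ n, ‖g₀ n‖ = 1 := fun n => norm_exp_I_mul_int t (j n)
  set Z : ℕ → Set E := fun n => {y | Complex.exp (Complex.I * t * f n y) = g₀ n}ᶜ with hZdef
  have hZ : ∀ n, MeasurableSet (Z n) := fun n =>
    ((hem t n) (measurableSet_singleton (g₀ n))).compl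
  have hZp : ∀ n, 1 / (m : ℝ) ≤ 1 - (μ.map (X n)).real (Z n) := fun n => by
    have := probReal_compl_eq_one_sub (μ := μ.map (X n))
      ((hem t n) (measurableSet_singleton (g₀ n)))
    refine (hj n).trans_eq ?_
    rw [eq_sub_iff_add_eq, ← eq_sub_iff_add_eq']
    exact this
  refine ⟨1 / (20 * C * K), 1 / (m : ℝ) * s ^ 4 / (512 * C ^ 2) / 2, 50 * C, by positivity,
    by positivity, by positivity, fun N =>
      ⟨∑ i ∈ Finset.range N, (μ.map (X (i + 1))).real (Z (i + 1)), ?_, ?_⟩⟩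
  · intro z hz
    have hw1 : ∀ n y, ‖Complex.exp (Complex.I * z * f n y) - 1‖ ≤ 1 / (10 * C) := by
      intro n y
      have hn : ‖Complex.I * z * f n y‖ ≤ 1 / (20 * C) := by
        rw [norm_mul, norm_mul, Complex.norm_I, one_mul]
        calc ‖z‖ * ‖(f n y : ℂ)‖ ≤ 1 / (20 * C * K) * K := by
              gcongr
              exact hfK n y
          _ = 1 / (20 * C) := by field_simp
      have hn1 : 1 / (20 * C) ≤ 1 := by
        rw [div_le_one (by positivity)]; linarith
      calc _ ≤ 2 * ‖Complex.I * z * f n y‖ := Complex.norm_exp_sub_one_le (hn.trans hn1)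
        _ ≤ 2 * (1 / (20 * C)) := by gcongr
        _ = _ := by field_simp; norm_num
    have hg₀ne : ∀ n, g₀ n ≠ 0 := fun n => Complex.exp_ne_zero _
    obtain ⟨h0, h1⟩ := norm_integral_backward_le hC (fun n => h.ellipticStep n)
      (w := fun n y => Complex.exp (Complex.I * z * f n y))
      (ζ := fun n y => Complex.exp (Complex.I * t * f n y) * (g₀ n)⁻¹ - 1) (hem z)
      (fun n => ((hem t n).mul_const _).sub_const _) hw1
      (fun n y => by
        refine (norm_sub_le _ _).trans ?_
        rw [norm_mul, norm_inv, hg₀1, norm_exp_I_mul_int, norm_one]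
        norm_num)
      hZ (fun n y hy => by
        have hy' : Complex.exp (Complex.I * t * f n y) = g₀ n := by
          simpa [hZdef] using hy
        rw [hy', mul_inv_cancel₀ (hg₀ne n), sub_self]) N
    rw [← hΦ] at h0 h1
    refine ⟨h0, le_of_eq_of_le ?_ h1⟩
    have hfac : ∀ n y, Complex.exp (Complex.I * z * f n y) *
        (1 + (Complex.exp (Complex.I * t * f n y) * (g₀ n)⁻¹ - 1))
        = Complex.exp (Complex.I * (t + z) * f n y) * (g₀ n)⁻¹ := by
      intro n y
      rw [add_sub_cancel, ← mul_assoc, ← Complex.exp_add]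
      congr 2
      ring
    simp only [hfac]
    rw [← h.integral_prod (fun n => (hem (t + z) n).mul_const _) (fun n => by
      obtain ⟨R, hR⟩ := heb (t + z) n
      exact ⟨R, fun y => by rw [norm_mul, norm_inv, hg₀1, inv_one, mul_one]; exact hR y⟩) N]
    simp only [Finset.prod_mul_distrib, prod_exp_eq]
    rw [integral_mul_const, norm_mul, norm_prod]
    simp [hg₀1]
  · rw [hΦ]
    exact norm_integral_backward_le_exp hC (fun n => h.ellipticStep n) (hem t)
      (fun n y => norm_exp_I_mul_int t _) hZ hs0 hs2 (fun n y hy => hs _ _ hy)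
      (fun n y hy => by simpa [hZdef] using hy) (by positivity) hZp N

lemma norm_charFn_le_of_bounded {μ : Measure Ω} {X : ℕ → Ω → E} {κ : ℕ → Kernel E E}
    {f : ℕ → E → ℤ} {C : ℝ} {K r : ℕ} (hC : 1 < C) (hK : 1 ≤ K) (hr : 1 ≤ r)
    (hchain : UEChain μ X κ C) (hf : ∀ n, Measurable (f n)) (hbound : ∀ n x, |f n x| ≤ (K : ℤ))
    (hV : Tendsto (fun N => VN μ X f N) atTop atTop) (hEdge : Edgeworth μ X f r)
    {t : ℝ} (hres : IsResonant K t) (ht0 : t ≠ 0) {ε : ℝ} (hε : 0 < ε) :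
    ∃ N₀, ∀ N ≥ N₀, ‖∫ ω, Complex.exp (Complex.I * (t : ℂ) * ((S X f N ω : ℤ) : ℂ)) ∂μ‖
      ≤ ε * (sigN μ X f N)⁻¹ ^ (r - 1) := by
  obtain ⟨l, m, -, -, hlm, ht⟩ := hres
  have := hchain.1
  have htne := exp_neg_I_mul_ne_one hlm ht ht0
  obtain ⟨δ, c, L, hδ, hc, hL, hM⟩ := hchain.exists_charFn_bounds hC hK hf hbound hlm ht
  obtain ⟨Dg, Cb, P, hPD, hPC, hP⟩ := hEdge
  have hCb : 0 ≤ Cb := (abs_nonneg _).trans (hPC 0 0 0)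
  set n₀ : ℕ := ⌈L * (r / c)⌉₊ with hn₀
  obtain ⟨A₁, A₂, hA₁, hA₂, hA⟩ := exists_norm_latticeChar_le htne r Dg (n₀ + r) hCb hδ
  set A₃ : ℝ := A₁ + 2 * A₂ + Real.exp c with hA₃
  have hA₃0 : 0 < A₃ := by positivity
  obtain ⟨N₁, hN₁⟩ := hP (ε / (2 * (A₁ + 1))) (by positivity)
  have hσlim : Tendsto (fun N => sigN μ X f N) atTop atTop := Real.tendsto_sqrt_atTop.comp hV
  obtain ⟨N₂, hN₂⟩ := eventually_atTop.1 ((hσlim.eventually_ge_atTop 1).and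
    ((hσlim.eventually_gt_atTop δ⁻¹).and (hσlim.eventually_ge_atTop (2 * A₃ / ε))))
  refine ⟨max N₁ N₂, fun N hN => ?_⟩
  obtain ⟨hσ1, hσδ, hσε⟩ := hN₂ N ((le_max_right _ _).trans hN)
  have hedge := hN₁ N ((le_max_left _ _).trans hN)
  set σ := sigN μ X f N with hσ
  set a := meanS μ X f N with ha
  have hσ0 : 0 < σ := by linarith
  have hδσ : 1 < δ * σ := by
    rwa [inv_lt_iff_one_lt_mul₀' hδ] at hσδ
  -- the law of the partial sum
  have hSm := measurable_S hchain.2.1 hf N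
  set F : Finset ℤ := Finset.Icc (-(N * K : ℤ)) (N * K) with hF
  have hSF : ∀ ω, S X f N ω ∈ F := fun ω => by
    rw [hF, Finset.mem_Icc, ← abs_le, S]
    refine (Finset.abs_sum_le_sum_abs _ _).trans ?_
    refine (Finset.sum_le_sum fun n _ => hbound n (X n ω)).trans_eq ?_
    simp
  set p : ℤ → ℝ := fun k => (μ {ω | S X f N ω = k}).toReal with hp
  have hpF : ∀ k ∉ F, p k = 0 := fun k hk => by
    have : {ω | S X f N ω = k} = ∅ := by
      ext ω
      simp only [Set.mem_ofPred_eq, Set.mem_empty_iff_false, iff_false]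
      exact fun h0 => hk (h0 ▸ hSF ω)
    simp only [hp, this, measure_empty, ENNReal.toReal_zero]
  have hp1 : ∑ k ∈ F, p k = 1 := by
    have := integral_comp_eq_sum μ hSm hSF (fun _ => (1 : ℝ))
    simpa using this.symm
  have hchar : ∀ z : ℂ, ∫ ω, Complex.exp (Complex.I * z * (S X f N ω : ℂ)) ∂μ
      = latticeChar F p z := fun z => by
    have := integral_comp_eq_sum μ hSm hSF (fun k => Complex.exp (Complex.I * z * k))
    simpa only [latticeChar, Complex.real_smul] using this
  have hSm' : Measurable fun ω => (S X f N ω : ℝ) :=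
    (measurable_from_top (f := fun k : ℤ => (k : ℝ))).comp hSm
  have hvar : ∑ k ∈ F, p k * ((k : ℝ) - a) ^ 2 = σ ^ 2 := by
    rw [hσ, sigN, VN, Real.sq_sqrt (variance_nonneg _ _), variance_eq_integral hSm'.aemeasurable]
    exact (integral_comp_eq_sum μ hSm hSF (fun k => ((k : ℝ) - a) ^ 2)).symm
  obtain ⟨M, hMratio, hMdecay⟩ := hM N
  have hpow : σ⁻¹ ^ r * σ = σ⁻¹ ^ (r - 1) := by
    obtain ⟨q, rfl⟩ := Nat.exists_eq_add_of_le' hr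
    rw [Nat.add_sub_cancel, pow_succ, mul_assoc, inv_mul_cancel₀ hσ0.ne', mul_one]
  have hσr : 0 < σ⁻¹ ^ r := by positivity
  have hlog : 0 ≤ Real.log σ := Real.log_nonneg hσ1
  have hbd : ‖∫ ω, Complex.exp (Complex.I * (t : ℂ) * ((S X f N ω : ℤ) : ℂ)) ∂μ‖
      ≤ A₁ * (ε / (2 * (A₁ + 1)) * σ⁻¹ ^ r * σ) + A₃ * σ⁻¹ ^ r := by
    rcases le_total (r / c * Real.log σ) M with hcase | hcase
    · refine hMdecay.trans ?_
      have h1 : Real.exp (c * (1 - M)) ≤ Real.exp c * σ⁻¹ ^ r := by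
        have e : σ⁻¹ ^ r = Real.exp (-(r * Real.log σ)) := by
          rw [Real.exp_neg, Real.exp_nat_mul, Real.exp_log hσ0, inv_pow]
        rw [e, ← Real.exp_add, Real.exp_le_exp]
        have := mul_le_mul_of_nonneg_left hcase hc.le
        have e₂ : c * (r / c * Real.log σ) = r * Real.log σ := by field_simp
        linarith
      refine h1.trans ?_
      have h2 : 0 ≤ A₁ * (ε / (2 * (A₁ + 1)) * σ⁻¹ ^ r * σ) := by positivity
      have h3 : Real.exp c * σ⁻¹ ^ r ≤ A₃ * σ⁻¹ ^ r := by
        gcongr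
        rw [hA₃]
        linarith
      linarith
    · have hexp : Real.exp (L * M) ≤ σ ^ n₀ := by
        have e : σ ^ n₀ = Real.exp (n₀ * Real.log σ) := by
          rw [Real.exp_nat_mul, Real.exp_log hσ0]
        rw [e, Real.exp_le_exp]
        calc L * M ≤ L * (r / c * Real.log σ) := by gcongr
          _ = L * (r / c) * Real.log σ := by ring
          _ ≤ n₀ * Real.log σ := by
              gcongr
              exact Nat.le_ceil _
      have h1 := hA F p a σ (ε / (2 * (A₁ + 1))) (2 * Real.exp (L * M)) (fun b => P b N)
        (fun k => ENNReal.toReal_nonneg) hpF hp1 hvar hσ1 hδσ (by positivity)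
        (fun z hz => by simpa only [hchar] using hMratio z hz)
        (fun b => hPD b N) (fun b i => hPC b N i) hedge
      rw [hchar]
      refine h1.trans ?_
      have h2 : A₂ * (2 * Real.exp (L * M)) * σ⁻¹ ^ (n₀ + r) ≤ 2 * A₂ * σ⁻¹ ^ r := by
        calc _ ≤ A₂ * (2 * σ ^ n₀) * σ⁻¹ ^ (n₀ + r) := by gcongr
          _ = 2 * A₂ * σ⁻¹ ^ r * (σ ^ n₀ * σ⁻¹ ^ n₀) := by rw [pow_add]; ring
          _ = _ := by rw [← mul_pow, mul_inv_cancel₀ hσ0.ne', one_pow, mul_one]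
      have h3 : 0 ≤ Real.exp c * σ⁻¹ ^ r := by positivity
      rw [hA₃]
      linarith
  refine hbd.trans ?_
  have h1 : A₁ * (ε / (2 * (A₁ + 1)) * σ⁻¹ ^ r * σ) ≤ ε / 2 * σ⁻¹ ^ (r - 1) := by
    have e : A₁ * (ε / (2 * (A₁ + 1)) * σ⁻¹ ^ r * σ)
        = A₁ / (A₁ + 1) * (ε / 2 * (σ⁻¹ ^ r * σ)) := by
      field_simp
    rw [e, hpow]
    refine mul_le_of_le_one_left (by positivity) ?_
    rw [div_le_one (by positivity)]
    linarith
  have h2 : A₃ * σ⁻¹ ^ r ≤ ε / 2 * σ⁻¹ ^ (r - 1) := by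
    rw [← hpow]
    rw [div_le_iff₀ hε] at hσε
    nlinarith
  linarith

/-- Theorem 2.3(i). If `S_N` obeys the usual Edgeworth expansion of order
`r`, then for every nonzero resonant point `t` one has `𝔼[e^{itS_N}] = o(σ_N^{-(r-1)})`. -/
theorem charFn_small_of_edgeworth
    (μ : Measure Ω) (X : ℕ → Ω → E) (κ : ℕ → Kernel E E) (f : ℕ → E → ℤ)
    (C : ℝ) (K r : ℕ) (hC : 1 < C) (hK : 1 ≤ K) (hr : 1 ≤ r)
    (hchain : UEChain μ X κ C) (hf : ∀ n, Measurable (f n))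
    (hbound : ∀ n ω, |f n (X n ω)| ≤ (K : ℤ))
    (hV : Tendsto (fun N => VN μ X f N) atTop atTop)
    (hEdge : Edgeworth μ X f r) :
    ∀ t : ℝ, IsResonant K t → t ≠ 0 →
      ∀ ε > 0, ∃ N₀, ∀ N ≥ N₀,
        ‖∫ ω, Complex.exp (Complex.I * (t : ℂ) * ((S X f N ω : ℤ) : ℂ)) ∂μ‖
          ≤ ε * (sigN μ X f N)⁻¹ ^ (r - 1) := by
  intro t hres ht0 ε hε
  set f' : ℕ → E → ℤ := fun n x => if |f n x| ≤ (K : ℤ) then f n x else 0 with hf'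
  have hS : S X f' = S X f := by
    funext N ω
    exact Finset.sum_congr rfl fun n _ => if_pos (hbound n ω)
  have hfm : ∀ n, Measurable (f' n) := fun n =>
    (measurable_from_top (f := fun k : ℤ => if |k| ≤ (K : ℤ) then k else 0)).comp (hf n)
  have hfb : ∀ n x, |f' n x| ≤ (K : ℤ) := fun n x => by
    simp only [hf']
    split_ifs with h
    · exact h
    · simp
  have hV' : Tendsto (fun N => VN μ X f' N) atTop atTop := by
    simpa only [VN, hS] using hV
  have hE' : Edgeworth μ X f' r := by
    simpa only [Edgeworth, sigN, VN, meanS, hS] using hEdge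
  simpa only [sigN, VN, hS] using
    norm_charFn_le_of_bounded hC hK hr hchain hfm hfb hV' hE' hres ht0 hε

end EdgeworthMC
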